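/- Let M be a germ at 0 of a real hypersurface in ℂ² defined by ρ(z₁,z₂) = Re z₁ + P(z₂) + f(z₂, Im z₁) = 0, where f is real analytic in a neighborhood of 0 in ℂ×ℝ with f(z₂,0) ≡ 0, P is C^∞-smooth with P(z₂) > 0 for all z₂ ≠ 0 in its domain and P(0) = 0, P vanishes to infinite order at z₂ = 0, and M is not rotationally symmetric (i.e. ρ(z₁,z₂) is not a function of (z₁,|z₂|) alone). Let H = h₁ ∂/∂z₁ + h₂ ∂/∂z₂ be a holomorphic vector field germ at (0,0), not identically zero, vanishing at (0,0), tangent to M, normalized so that h₂(0,z₂) = iβz₂ on a neighborhood of 0 for some β ∈ ℝ∖{0}. Then ∂h₂/∂z₁(0,z₂) ≡ 0 on a neighborhood of 0 (i.e. the coefficient b₁ of z₁ in the expansion h₂(z₁,z₂) = Σ_j z₁ʲ b_j(z₂) vanishes identically). -/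

import Mathlib

open Filter Set Metric Complex

/-- The Wirtinger derivative `∂u/∂z = (u_x - i u_y)/2` of a real-valued function on `ℂ`. -/
noncomputable def wDeriv (u : ℂ → ℝ) (z : ℂ) : ℂ :=
  (((fderiv ℝ u z) 1 : ℝ) - Complex.I * ((fderiv ℝ u z) Complex.I : ℝ)) / 2

/-- A function on `ℂ` that vanishes to infinite order at `0`. -/
def FlatAt (F : ℂ → ℝ) : Prop := ∀ n : ℕ, F =O[nhds (0:ℂ)] fun z => ‖z‖ ^ n

lemma one_dim (S S' : ℝ → ℝ) (δ C : ℝ) (hδ : 0 < δ) (hC : 0 ≤ C)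
    (hd : ∀ r ∈ Ioo 0 δ, HasDerivAt S (S' r) r)
    (hb : ∀ r ∈ Ioo 0 δ, r * S' r ≤ C + C * r * (- S r))
    (hflat : ∀ K : ℝ, ∃ ρ > 0, ∀ r ∈ Ioo 0 ρ, S r ≤ K * Real.log r) : False := by
  set K := C * Real.exp (C * δ) + 1 with hK
  have hKpos : 0 < K := by positivity
  obtain ⟨ρ, hρ, hS⟩ := hflat (K + 1)
  set v : ℝ → ℝ := fun r => Real.exp (C * r) * S r - K * Real.log r with hv
  have hvd : ∀ r ∈ Ioo 0 δ, HasDerivAt v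
      (Real.exp (C * r) * C * S r + Real.exp (C * r) * S' r - K * r⁻¹) r := by
    intro r hr
    have h1 : HasDerivAt (fun r : ℝ => Real.exp (C * r)) (Real.exp (C * r) * C) r := by
      simpa using ((hasDerivAt_id r).const_mul C).exp
    exact (h1.mul (hd r hr)).sub ((Real.hasDerivAt_log hr.1.ne').const_mul K)
  have hanti : AntitoneOn v (Ioo 0 δ) := by
    apply antitoneOn_of_deriv_nonpos (convex_Ioo 0 δ)
    · exact fun r hr => (hvd r hr).continuousAt.continuousWithinAt
    · intro r hr
      rw [interior_Ioo] at hr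
      exact (hvd r hr).differentiableAt.differentiableWithinAt
    · intro r hr
      rw [interior_Ioo] at hr
      rw [(hvd r hr).deriv]
      have h0 := hr.1
      have e1 : Real.exp (C * r) ≤ Real.exp (C * δ) := by
        apply Real.exp_le_exp.mpr; exact mul_le_mul_of_nonneg_left hr.2.le hC
      have e0 := Real.exp_pos (C * r)
      have h2 := hb r hr
      have h3 : r * (Real.exp (C * r) * C * S r + Real.exp (C * r) * S' r - K * r⁻¹) ≤ 0 := by
        have : r * (K * r⁻¹) = K := by field_simp
        have h4 : r * (Real.exp (C * r) * C * S r + Real.exp (C * r) * S' r - K * r⁻¹)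
          = Real.exp (C * r) * (r * S' r + C * r * S r) - K := by
          rw [mul_sub, this]; ring
        rw [h4]
        have h5 : r * S' r + C * r * S r ≤ C := by linarith
        nlinarith [mul_le_mul_of_nonneg_left h5 e0.le, mul_le_mul_of_nonneg_right e1 hC]
      by_contra hcon
      push Not at hcon
      nlinarith [mul_pos h0 hcon]
  set r0 := δ / 2
  have hr0 : r0 ∈ Ioo 0 δ := ⟨by positivity, by simp only [r0]; linarith⟩
  set B := v r0
  set r := min (min (ρ/2) (1/2)) (min r0 (Real.exp (B - 1)))
  have hrpos : 0 < r := by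
    simp only [r]; refine lt_min (lt_min (by positivity) (by norm_num)) (lt_min hr0.1 (Real.exp_pos _))
  have hr1 : r ≤ ρ/2 := (min_le_left _ _).trans (min_le_left _ _)
  have hr2 : r ≤ 1/2 := (min_le_left _ _).trans (min_le_right _ _)
  have hr3 : r ≤ r0 := (min_le_right _ _).trans (min_le_left _ _)
  have hr4 : r ≤ Real.exp (B-1) := (min_le_right _ _).trans (min_le_right _ _)
  have hlog : Real.log r ≤ B - 1 := by
    rw [← Real.log_exp (B-1)]; exact Real.log_le_log hrpos hr4
  have hlog0 : Real.log r < 0 := Real.log_neg hrpos (by linarith)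
  have h1 := hanti ⟨hrpos, by linarith [hr0.2]⟩ hr0 hr3
  have h2 := hS r ⟨hrpos, by linarith⟩
  have h3 : B ≤ Real.exp (C * r) * S r - K * Real.log r := h1
  have h4 : (1:ℝ) ≤ Real.exp (C * r) := Real.one_le_exp (by positivity)
  have h5 : S r ≤ 0 := by nlinarith
  nlinarith

lemma flat_analytic (F : ℂ → ℝ) (δ : ℝ) (hF : AnalyticOnNhd ℝ F (ball 0 δ))
    (hflat : FlatAt F) : ∀ z ∈ ball (0:ℂ) δ, F z = 0 := by
  intro z hz
  have hδ : 0 < δ := by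
    rw [mem_ball] at hz; exact lt_of_le_of_lt dist_nonneg hz
  set U : Set ℝ := (fun t : ℝ => t • z) ⁻¹' (ball 0 δ)
  have hmap : AnalyticOnNhd ℝ (fun t : ℝ => F (t • z)) U := by
    intro t ht
    have : AnalyticAt ℝ (fun t : ℝ => t • z) t := by fun_prop
    exact (hF (t • z) ht).comp_of_eq this rfl
  have hU0 : (0:ℝ) ∈ U := by simp [U, hδ]
  have hU1 : (1:ℝ) ∈ U := by simpa [U] using hz
  have hUconv : Convex ℝ U := by
    have := (convex_ball (0:ℂ) δ).linear_preimage ((LinearMap.id : ℝ →ₗ[ℝ] ℝ).smulRight z)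
    exact this
  have hev : (fun t : ℝ => F (t • z)) =ᶠ[nhds 0] 0 := by
    by_contra hcon
    have han := hmap 0 hU0
    obtain ⟨n, g, hg, hg0, hfg⟩ := (han.exists_eventuallyEq_pow_smul_nonzero_iff).mpr hcon
    have hlim : Tendsto (fun t : ℝ => t • z) (nhds 0) (nhds 0) := by
      have : Continuous (fun t : ℝ => t • z) := by fun_prop
      simpa using this.tendsto 0
    have hO := (hflat (n+1)).comp_tendsto hlim
    have hO2 : (fun t : ℝ => F (t • z)) =O[nhds 0] fun t : ℝ => t ^ (n+1) := by
      refine hO.trans (Asymptotics.IsBigO.of_bound (‖z‖^(n+1)) (Eventually.of_forall fun t => ?_))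
      simp [mul_pow, mul_comm]
    have hO3 : (fun t : ℝ => F (t • z)) =o[nhds 0] fun t : ℝ => t ^ n := by
      refine hO2.trans_isLittleO ?_
      exact Asymptotics.isLittleO_pow_pow (Nat.lt_succ_self n)
    have h4 : Tendsto (fun t : ℝ => F (t • z) / t ^ n) (nhdsWithin 0 {0}ᶜ) (nhds 0) :=
      (hO3.tendsto_div_nhds_zero).mono_left nhdsWithin_le_nhds
    have h5 : Tendsto (fun t : ℝ => F (t • z) / t ^ n) (nhdsWithin 0 {0}ᶜ) (nhds (g 0)) := by
      have : Tendsto g (nhdsWithin 0 {0}ᶜ) (nhds (g 0)) :=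
        hg.continuousAt.tendsto.mono_left nhdsWithin_le_nhds
      refine this.congr' ?_
      filter_upwards [hfg.filter_mono nhdsWithin_le_nhds, self_mem_nhdsWithin] with t ht ht0
      have : t ≠ 0 := ht0
      rw [ht]; simp; field_simp
    exact hg0 (tendsto_nhds_unique h5 h4)
  have := hmap.eqOn_zero_of_preconnected_of_eventuallyEq_zero hUconv.isPreconnected hU0 hev hU1
  simpa using this

lemma flat_fderiv (P : ℂ → ℝ) (hP : ContDiffAt ℝ 2 P 0) (hpos : ∀ᶠ z in nhds (0:ℂ), 0 ≤ P z)
    (hflat : FlatAt P) : FlatAt (fun z => ‖fderiv ℝ P z‖) := by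
  have h1 : ContDiffAt ℝ 1 (fderiv ℝ P) 0 := hP.fderiv_right (by norm_num)
  obtain ⟨K, t, ht, hK⟩ := h1.exists_lipschitzOnWith
  have hdiff : ∀ᶠ z in nhds (0:ℂ), DifferentiableAt ℝ P z := by
    have := hP.eventually (by simp)
    filter_upwards [this] with z hz using hz.differentiableAt (by norm_num)
  obtain ⟨ρ, hρ, hball⟩ := Metric.eventually_nhds_iff_ball.mp (hpos.and (hdiff.and ht))
  intro n
  obtain ⟨C, hC0, hC⟩ := (hflat (2 * (n+1))).exists_pos
  rw [Asymptotics.isBigOWith_iff] at hC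
  refine Asymptotics.IsBigO.of_bound (C + K) ?_
  have hsm : ∀ᶠ z in nhds (0:ℂ), z ∈ ball (0:ℂ) (min (ρ/2) 1) := ball_mem_nhds _ (by positivity)
  filter_upwards [hC, hsm] with z hz hzs
  rw [mem_ball_zero_iff] at hzs
  have hz1 : ‖z‖ < ρ/2 := lt_of_lt_of_le hzs (min_le_left _ _)
  have hz2 : ‖z‖ < 1 := lt_of_lt_of_le hzs (min_le_right _ _)
  have hPz : P z ≤ C * ‖z‖^(2*(n+1)) := by
    have := (le_abs_self (P z)).trans hz
    simpa using this
  simp only [norm_norm, norm_pow]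
  set s := ‖z‖^(n+1) with hs
  have hsz : s ≤ ‖z‖ := by
    rw [hs]; exact pow_le_of_le_one (norm_nonneg _) hz2.le (by simp)
  have hsn : s ≤ ‖z‖^n := by
    rw [hs, pow_succ]; exact mul_le_of_le_one_right (by positivity) hz2.le
  have hPs : P z ≤ C * s^2 := by rw [hs, ← pow_mul, mul_comm (n+1) 2]; exact hPz
  by_cases hz0 : z = 0
  · -- derivative vanishes at a minimum
    subst hz0
    have hP0 : P 0 = 0 := by
      have h2 : P 0 ≤ 0 := by simpa using hPz
      exact le_antisymm h2 (hball 0 (by simp [hρ])).1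
    have hmin : IsLocalMin P 0 := by
      filter_upwards [hpos] with y hy
      rw [hP0]; exact hy
    rw [hmin.fderiv_eq_zero]
    simp only [norm_zero]
    positivity
  have hs0 : 0 < s := by
    have : 0 < ‖z‖ := norm_pos_iff.mpr hz0
    positivity
  refine le_trans ?_ (mul_le_mul_of_nonneg_left hsn (by positivity))
  apply ContinuousLinearMap.opNorm_le_of_unit_norm (by positivity)
  have key : ∀ v : ℂ, ‖v‖ = 1 → fderiv ℝ P z v ≤ (C + K) * s := by
    intro v hv
    have hcl : ∀ y ∈ closedBall z s, y ∈ ball (0:ℂ) ρ := by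
      intro y hy
      rw [mem_closedBall, dist_eq_norm] at hy
      rw [mem_ball_zero_iff]
      calc ‖y‖ = ‖(y - z) + z‖ := by ring_nf
        _ ≤ ‖y - z‖ + ‖z‖ := norm_add_le _ _
        _ < ρ := by linarith
    have hzt : z ∈ t := (hball z (hcl z (mem_closedBall_self hs0.le))).2.2
    have hbound : ∀ y ∈ closedBall z s, ‖fderiv ℝ P y - fderiv ℝ P z‖ ≤ K * s := by
      intro y hy
      have := hK.norm_sub_le (hball y (hcl y hy)).2.2 hzt
      refine this.trans ?_
      rw [mem_closedBall, dist_eq_norm] at hy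
      exact mul_le_mul_of_nonneg_left hy K.2
    have hy : z - s • v ∈ closedBall z s := by
      rw [mem_closedBall, dist_eq_norm]
      simp [norm_smul, hv, abs_of_pos hs0]
    have := (convex_closedBall z s).norm_image_sub_le_of_norm_hasFDerivWithin_le' (f := P)
      (φ := fderiv ℝ P z)
      (fun y hy => (hball y (hcl y hy)).2.1.hasFDerivAt.hasFDerivWithinAt)
      hbound (mem_closedBall_self hs0.le) hy
    have e1 : z - s • v - z = -(s • v) := by ring
    rw [e1] at this
    simp only [map_neg, map_smul, norm_neg, norm_smul, hv, mul_one, smul_eq_mul] at this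
    rw [Real.norm_eq_abs, Real.norm_eq_abs, abs_of_pos hs0] at this
    have h3 := (abs_le.mp this).2
    have h4 := (hball _ (hcl _ hy)).1
    have h5 : s * fderiv ℝ P z v ≤ s * ((C + K) * s) := by nlinarith
    exact le_of_mul_le_mul_left h5 hs0
  intro v hv
  rw [Real.norm_eq_abs, abs_le]
  constructor
  · have := key (-v) (by simpa using hv)
    rw [map_neg] at this; linarith
  · exact key v hv

lemma a0_zero (a γ : ℂ → ℂ) (ha : AnalyticAt ℂ a 0) (hγ : ContinuousAt γ 0) (hγ0 : γ 0 ≠ 0)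
    (ha0 : a 0 = 0) (hflat : FlatAt (fun z => (γ z * a z).re)) : ∀ᶠ z in nhds (0:ℂ), a z = 0 := by
  by_contra hcon
  obtain ⟨k, g, hg, hg0, hfg⟩ := (ha.exists_eventuallyEq_pow_smul_nonzero_iff).mpr hcon
  have hk : k ≠ 0 := by
    rintro rfl
    have := hfg.self_of_nhds
    simp [ha0] at this
    exact hg0 this.symm
  set c := γ 0 * g 0 with hc
  have hc0 : c ≠ 0 := mul_ne_zero hγ0 hg0
  obtain ⟨η, hη⟩ := IsAlgClosed.exists_pow_nat_eq ((starRingEnd ℂ) c) (Nat.pos_of_ne_zero hk)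
  have hlim : Tendsto (fun t : ℝ => (t:ℂ) * η) (nhds 0) (nhds 0) := by
    have : Continuous (fun t : ℝ => (t:ℂ) * η) := by fun_prop
    simpa using this.tendsto 0
  have hO := (hflat (k+1)).comp_tendsto hlim
  have hO2 : (fun t : ℝ => (γ (t * η) * a (t * η)).re) =O[nhds 0] fun t : ℝ => t ^ (k+1) := by
    refine hO.trans (Asymptotics.IsBigO.of_bound (‖η‖^(k+1)) (Eventually.of_forall fun t => ?_))
    simp [mul_pow, mul_comm]
  have hO3 : (fun t : ℝ => (γ (t * η) * a (t * η)).re) =o[nhds 0] fun t : ℝ => t ^ k :=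
    hO2.trans_isLittleO (Asymptotics.isLittleO_pow_pow (Nat.lt_succ_self k))
  have h4 : Tendsto (fun t : ℝ => (γ (t * η) * a (t * η)).re / t ^ k) (nhdsWithin 0 {0}ᶜ) (nhds 0) :=
    (hO3.tendsto_div_nhds_zero).mono_left nhdsWithin_le_nhds
  have h5 : Tendsto (fun t : ℝ => (γ (t * η) * a (t * η)).re / t ^ k) (nhdsWithin 0 {0}ᶜ)
      (nhds ((c * η^k).re)) := by
    have h6 : Tendsto (fun t : ℝ => (γ (t * η) * g (t * η) * η^k).re) (nhds 0)
        (nhds ((c * η^k).re)) := by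
      have := ((hγ.tendsto.comp hlim).mul (hg.continuousAt.tendsto.comp hlim)).mul_const (η^k)
      exact (Complex.continuous_re.tendsto _).comp this
    refine (h6.mono_left nhdsWithin_le_nhds).congr' ?_
    filter_upwards [(hlim.eventually hfg).filter_mono nhdsWithin_le_nhds, self_mem_nhdsWithin]
      with t ht ht0
    have : t ≠ 0 := ht0
    rw [ht]
    have e : γ (t * η) * ((t * η - 0) ^ k • g (t * η)) =
      ((t ^ k : ℝ) : ℂ) * (γ (t * η) * g (t * η) * η^k) := by
      simp [mul_pow]; ring
    rw [e, Complex.re_ofReal_mul]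
    field_simp
  have h7 := tendsto_nhds_unique h5 h4
  rw [hη, Complex.mul_conj, Complex.ofReal_re] at h7
  exact hc0 (Complex.normSq_eq_zero.mp h7)

lemma cauchy_half (φ : ℂ → ℂ) (R B : ℝ) (hR : 0 < R) (hφ : DifferentiableOn ℂ φ (ball 0 R))
    (hB : ∀ w ∈ ball (0:ℂ) R, ‖φ w‖ ≤ B) :
    DifferentiableOn ℂ (deriv φ) (ball 0 (R/2)) ∧
    ∀ w ∈ ball (0:ℂ) (R/2), ‖deriv φ w‖ ≤ B / (R/4) := by
  constructor
  · exact (hφ.deriv isOpen_ball).mono (ball_subset_ball (by linarith))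
  · intro w hw
    rw [mem_ball_zero_iff] at hw
    have hsub : closedBall w (R/4) ⊆ ball 0 R := by
      intro y hy
      rw [mem_closedBall, dist_eq_norm] at hy
      rw [mem_ball_zero_iff]
      calc ‖y‖ = ‖(y - w) + w‖ := by ring_nf
        _ ≤ ‖y - w‖ + ‖w‖ := norm_add_le _ _
        _ < R := by linarith
    apply Complex.norm_deriv_le_of_forall_mem_sphere_norm_le (by positivity)
    · exact (hφ.mono hsub).diffContOnCl_ball (subset_refl _)
    · intro y hy
      exact hB y (hsub (sphere_subset_closedBall hy))

lemma int_bound (ψ : ℂ → ℂ) (ρ K : ℝ) (m : ℕ) (hK : 0 ≤ K)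
    (hψ : DifferentiableOn ℂ ψ (ball 0 ρ))
    (hB : ∀ w ∈ ball (0:ℂ) ρ, ‖deriv ψ w‖ ≤ K * ‖w‖^m) :
    ∀ w ∈ ball (0:ℂ) ρ, ‖ψ w - ψ 0‖ ≤ K * ‖w‖^(m+1) := by
  intro w hw
  rw [mem_ball_zero_iff] at hw
  have hsub : closedBall (0:ℂ) ‖w‖ ⊆ ball 0 ρ := closedBall_subset_ball hw
  have := (convex_closedBall (0:ℂ) ‖w‖).norm_image_sub_le_of_norm_deriv_le (f := ψ)
    (C := K * ‖w‖^m) (x := 0) (y := w)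
    (fun x hx => (hψ x (hsub hx)).differentiableAt (isOpen_ball.mem_nhds (hsub hx)))
    (fun x hx => (hB x (hsub hx)).trans (by
      rw [mem_closedBall_zero_iff] at hx; gcongr))
    (by simp) (by simp)
  simpa [pow_succ, mul_assoc] using this

lemma taylor1 (φ : ℂ → ℂ) (ρ K : ℝ) (hK : 0 ≤ K) (hφ : DifferentiableOn ℂ φ (ball 0 ρ))
    (m : ℕ) (c0 : ℂ)
    (q : ℂ → ℂ) (hq : Differentiable ℂ q)
    (hB : ∀ w ∈ ball (0:ℂ) ρ, ‖deriv φ w - deriv q w‖ ≤ K * ‖w‖^m) (hc : c0 = φ 0 - q 0) :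
    ∀ w ∈ ball (0:ℂ) ρ, ‖φ w - q w - c0‖ ≤ K * ‖w‖^(m+1) := by
  have := int_bound (fun w => φ w - q w) ρ K m hK (hφ.sub hq.differentiableOn) (by
    intro w hw
    have h1 := (hφ w hw).differentiableAt (isOpen_ball.mem_nhds hw)
    have h2 : deriv (fun w => φ w - q w) w = deriv φ w - deriv q w := deriv_sub h1 (hq w)
    rw [h2]; exact hB w hw)
  intro w hw
  rw [hc]; exact this w hw

lemma taylor_bounds (R B : ℝ) (hR : 0 < R) (hB0 : 0 ≤ B) : ∃ C : ℝ, 0 ≤ C ∧ ∀ φ : ℂ → ℂ,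
    DifferentiableOn ℂ φ (ball 0 R) → (∀ w ∈ ball (0:ℂ) R, ‖φ w‖ ≤ B) →
    ∀ w ∈ ball (0:ℂ) (R/8),
      ‖φ w - φ 0‖ ≤ C * ‖w‖ ∧
      ‖φ w - φ 0 - w * deriv φ 0‖ ≤ C * ‖w‖^2 ∧
      ‖deriv φ w - deriv φ 0‖ ≤ C * ‖w‖ ∧
      ‖deriv φ w - deriv φ 0 - w * deriv (deriv φ) 0‖ ≤ C * ‖w‖^2 ∧
      ‖φ w - φ 0 - w * deriv φ 0 - w^2/2 * deriv (deriv φ) 0‖ ≤ C * ‖w‖^3 := by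
  set B1 := B / (R/4)
  set B2 := B1 / (R/2/4)
  set B3 := B2 / (R/2/2/4)
  have h1 : 0 ≤ B1 := by positivity
  have h2 : 0 ≤ B2 := by positivity
  have h3 : 0 ≤ B3 := by positivity
  refine ⟨B1 + B2 + B3, by positivity, ?_⟩
  intro φ hφ hB w hw
  obtain ⟨d1, b1⟩ := cauchy_half φ R B hR hφ hB
  obtain ⟨d2, b2⟩ := cauchy_half (deriv φ) (R/2) B1 (by positivity) d1 b1
  obtain ⟨d3, b3⟩ := cauchy_half (deriv (deriv φ)) (R/2/2) B2 (by positivity) d2 b2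
  have s1 : ball (0:ℂ) (R/8) ⊆ ball 0 R := ball_subset_ball (by linarith)
  have s2 : ball (0:ℂ) (R/8) ⊆ ball 0 (R/2) := ball_subset_ball (by linarith)
  have s3 : ball (0:ℂ) (R/8) ⊆ ball 0 (R/2/2) := ball_subset_ball (by linarith)
  have s4 : ball (0:ℂ) (R/8) ⊆ ball 0 (R/2/2/2) := ball_subset_ball (by linarith)
  have dφ := hφ.mono s1
  have dφ1 := d1.mono s2
  have dφ2 := d2.mono s3
  have k2 := int_bound (deriv (deriv φ)) (R/8) B3 0 h3 dφ2
    (fun w hw => by simpa using b3 w (s4 hw))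
  have k1 := int_bound (deriv φ) (R/8) B2 0 h2 dφ1 (fun w hw => by simpa using b2 w (s3 hw))
  have k0 := int_bound φ (R/8) B1 0 h1 dφ (fun w hw => by simpa using b1 w (s2 hw))
  have m1 := taylor1 (deriv φ) (R/8) B3 h3 dφ1 1 (deriv φ 0)
    (fun w => w * deriv (deriv φ) 0) (by fun_prop) (fun w hw => by
      have := k2 w hw
      simpa using this) (by simp)
  have m0 := taylor1 φ (R/8) B2 h2 dφ 1 (φ 0)
    (fun w => w * deriv φ 0) (by fun_prop) (fun w hw => by
      have := k1 w hw
      simpa using this) (by simp)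
  have n0 := taylor1 φ (R/8) B3 h3 dφ 2 (φ 0)
    (fun w => w * deriv φ 0 + w^2/2 * deriv (deriv φ) 0) (by fun_prop) (fun w hw => by
      have := m1 w hw
      have e : deriv (fun w : ℂ => w * deriv φ 0 + w^2/2 * deriv (deriv φ) 0) w =
          deriv φ 0 + w * deriv (deriv φ) 0 := by
        have : HasDerivAt (fun w : ℂ => w * deriv φ 0 + w^2/2 * deriv (deriv φ) 0)
          (1 * deriv φ 0 + (((2:ℕ):ℂ) * w^(2-1))/2 * deriv (deriv φ) 0) w :=
          ((hasDerivAt_id w).mul_const _).add (((hasDerivAt_pow 2 w).div_const 2).mul_const _)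
        rw [this.deriv]; norm_num
      rw [e]
      calc _ = ‖deriv φ w - w * deriv (deriv φ) 0 - deriv φ 0‖ := by ring_nf
        _ ≤ _ := this) (by simp)
  have hw0 := norm_nonneg w
  refine ⟨?_, ?_, ?_, ?_, ?_⟩
  · have := k0 w hw
    simp only [zero_add, pow_one] at this
    nlinarith [mul_nonneg h2 hw0, mul_nonneg h3 hw0]
  · have := m0 w hw
    norm_num only at this
    rw [show φ w - φ 0 - w * deriv φ 0 = φ w - w * deriv φ 0 - φ 0 by ring]
    nlinarith [mul_nonneg h1 (sq_nonneg ‖w‖), mul_nonneg h3 (sq_nonneg ‖w‖)]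
  · have := k1 w hw
    simp only [zero_add, pow_one] at this
    nlinarith [mul_nonneg h1 hw0, mul_nonneg h3 hw0]
  · have := m1 w hw
    norm_num only at this
    rw [show deriv φ w - deriv φ 0 - w * deriv (deriv φ) 0
      = deriv φ w - w * deriv (deriv φ) 0 - deriv φ 0 by ring]
    nlinarith [mul_nonneg h1 (sq_nonneg ‖w‖), mul_nonneg h2 (sq_nonneg ‖w‖)]
  · have := n0 w hw
    rw [show φ w - φ 0 - w * deriv φ 0 - w^2/2 * deriv (deriv φ) 0
      = φ w - (w * deriv φ 0 + w^2/2 * deriv (deriv φ) 0) - φ 0 by ring]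
    have h4 : 0 ≤ ‖w‖^3 := by positivity
    nlinarith [mul_nonneg h1 h4, mul_nonneg h2 h4]

lemma limit_differentiable (δ : ℝ) (u : ℕ → ℂ → ℂ) (v : ℂ → ℂ) (C : ℝ)
    (hu : ∀ᶠ n in atTop, DifferentiableOn ℂ (u n) (ball 0 δ))
    (hb : ∀ᶠ n in atTop, ∀ z ∈ ball (0:ℂ) δ, ‖u n z - v z‖ ≤ C * (1/((n:ℝ)+1))) :
    DifferentiableOn ℂ v (ball 0 δ) := by
  have : TendstoUniformlyOn u v atTop (ball 0 δ) := by
    rw [Metric.tendstoUniformlyOn_iff]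
    intro ε hε
    have h1 : Tendsto (fun n : ℕ => C * (1/((n:ℝ)+1))) atTop (nhds (C * 0)) :=
      tendsto_one_div_add_atTop_nhds_zero_nat.const_mul C
    rw [mul_zero] at h1
    filter_upwards [hb, h1.eventually_lt_const hε] with n hn hn2 z hz
    rw [dist_comm, dist_eq_norm]
    exact (hn z hz).trans_lt hn2
  exact this.tendstoLocallyUniformlyOn.differentiableOn hu isOpen_ball

lemma coeffs (h : ℂ × ℂ → ℂ) (s : ℝ) (hs : 0 < s) (hh : DifferentiableOn ℂ h (ball 0 s)) :
    ∃ δ C : ℝ, 0 < δ ∧ 0 ≤ C ∧ δ < s ∧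
      DifferentiableOn ℂ (fun z => h (0, z)) (ball 0 δ) ∧
      DifferentiableOn ℂ (fun z => deriv (fun w => h (w, z)) 0) (ball 0 δ) ∧
      DifferentiableOn ℂ (fun z => deriv (deriv (fun w => h (w, z))) 0) (ball 0 δ) ∧
      ∀ z ∈ ball (0:ℂ) δ, DifferentiableOn ℂ (fun w => h (w, z)) (ball 0 δ) ∧
      ∀ w ∈ ball (0:ℂ) δ,
      ‖h (w, z) - h (0, z)‖ ≤ C * ‖w‖ ∧
      ‖h (w, z) - h (0, z) - w * deriv (fun w => h (w, z)) 0‖ ≤ C * ‖w‖^2 ∧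
      ‖deriv (fun w => h (w, z)) w - deriv (fun w => h (w, z)) 0‖ ≤ C * ‖w‖ ∧
      ‖deriv (fun w => h (w, z)) w - deriv (fun w => h (w, z)) 0
        - w * deriv (deriv (fun w => h (w, z))) 0‖ ≤ C * ‖w‖^2 := by
  have hsub : closedBall (0 : ℂ × ℂ) (s/2) ⊆ ball 0 s := closedBall_subset_ball (by linarith)
  obtain ⟨B, hB⟩ := (isCompact_closedBall (0 : ℂ × ℂ) (s/2)).exists_bound_of_continuousOn
    (hh.continuousOn.mono hsub)
  have hB0 : 0 ≤ B := (norm_nonneg _).trans (hB 0 (by simp; positivity))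
  set R := s/2 with hR
  have hRpos : 0 < R := by positivity
  obtain ⟨C, hC0, hC⟩ := taylor_bounds R B hRpos hB0
  have hmem : ∀ w ∈ ball (0:ℂ) R, ∀ z ∈ ball (0:ℂ) R, (w, z) ∈ closedBall (0 : ℂ × ℂ) R := by
    intro w hw z hz
    rw [mem_ball_zero_iff] at hw hz
    rw [mem_closedBall_zero_iff, Prod.norm_mk]
    exact max_le hw.le hz.le
  have hdw : ∀ z ∈ ball (0:ℂ) R, DifferentiableOn ℂ (fun w => h (w, z)) (ball 0 R) := by
    intro z hz
    refine hh.comp (t := ball 0 s) (f := fun w : ℂ => (w, z)) (by fun_prop) ?_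
    exact fun w hw => hsub (hmem w hw z hz)
  have hdz : ∀ w ∈ ball (0:ℂ) R, DifferentiableOn ℂ (fun z => h (w, z)) (ball 0 R) := by
    intro w hw
    refine hh.comp (t := ball 0 s) (f := fun z : ℂ => (w, z)) (by fun_prop) ?_
    exact fun z hz => hsub (hmem w hw z hz)
  have hT : ∀ z ∈ ball (0:ℂ) R, _ := fun z hz => hC (fun w => h (w, z)) (hdw z hz)
    (fun w hw => hB _ (hmem w hw z hz))
  have s8 : ball (0:ℂ) (R/8) ⊆ ball 0 R := ball_subset_ball (by linarith)
  have D0 : DifferentiableOn ℂ (fun z => h (0, z)) (ball 0 (R/8)) :=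
    (hdz 0 (by simpa using hRpos)).mono s8
  -- the sequence 1/(n+1)
  have hlim : ∀ᶠ n : ℕ in atTop, (1/((n:ℝ)+1)) < R/8 :=
    tendsto_one_div_add_atTop_nhds_zero_nat.eventually_lt_const (by positivity)
  have hmemn : ∀ n : ℕ, (1/((n:ℝ)+1)) < R/8 → (1/((n:ℂ)+1)) ∈ ball (0:ℂ) (R/8) := by
    intro n hn
    rw [mem_ball_zero_iff]
    have : ‖(1/((n:ℂ)+1))‖ = 1/((n:ℝ)+1) := by
      rw [show (1/((n:ℂ)+1)) = ((1/((n:ℝ)+1) : ℝ) : ℂ) by push_cast; rfl]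
      rw [Complex.norm_real, Real.norm_eq_abs, abs_of_pos (by positivity)]
    rw [this]; exact hn
  have hnn : ∀ n : ℕ, ‖(1/((n:ℂ)+1))‖ = 1/((n:ℝ)+1) := by
    intro n
    rw [show (1/((n:ℂ)+1)) = ((1/((n:ℝ)+1) : ℝ) : ℂ) by push_cast; rfl]
    rw [Complex.norm_real, Real.norm_eq_abs, abs_of_pos (by positivity)]
  have hne : ∀ n : ℕ, ((n:ℂ)+1) ≠ 0 := fun n => Nat.cast_add_one_ne_zero n
  have hnorm1 : ∀ n : ℕ, ‖((n:ℂ)+1)‖ = (n:ℝ)+1 := by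
    intro n
    rw [show ((n:ℂ)+1) = (((n:ℝ)+1 : ℝ) : ℂ) by push_cast; rfl]
    rw [Complex.norm_real, Real.norm_eq_abs, abs_of_pos (by positivity)]
  have D1 : DifferentiableOn ℂ (fun z => deriv (fun w => h (w, z)) 0) (ball 0 (R/8)) := by
    apply limit_differentiable (R/8)
      (fun n z => ((n:ℂ)+1) * (h (1/((n:ℂ)+1), z) - h (0, z))) _ C
    · filter_upwards [hlim] with n hn
      exact (((hdz _ (s8 (hmemn n hn))).mono s8).sub D0).const_mul _
    · filter_upwards [hlim] with n hn z hz
      have := (hT z (s8 hz) _ (hmemn n hn)).2.1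
      have e : ((n:ℂ)+1) * (h (1/((n:ℂ)+1), z) - h (0, z)) - deriv (fun w => h (w, z)) 0
        = ((n:ℂ)+1) * (h (1/((n:ℂ)+1), z) - h (0, z)
          - (1/((n:ℂ)+1)) * deriv (fun w => h (w, z)) 0) := by
        have := hne n
        field_simp
      rw [e, norm_mul, hnorm1]
      rw [hnn] at this
      have hp : (0:ℝ) < (n:ℝ)+1 := by positivity
      calc _ ≤ ((n:ℝ)+1) * (C * (1/((n:ℝ)+1))^2) := by gcongr
        _ = _ := by field_simp
  have D2 : DifferentiableOn ℂ (fun z => deriv (deriv (fun w => h (w, z))) 0) (ball 0 (R/8)) := by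
    apply limit_differentiable (R/8)
      (fun n z => 2 * ((n:ℂ)+1)^2 * (h (1/((n:ℂ)+1), z) - h (0, z)
        - (1/((n:ℂ)+1)) * deriv (fun w => h (w, z)) 0)) _ (2*C)
    · filter_upwards [hlim] with n hn
      exact ((((hdz _ (s8 (hmemn n hn))).mono s8).sub D0).sub (D1.const_mul _)).const_mul _
    · filter_upwards [hlim] with n hn z hz
      have := (hT z (s8 hz) _ (hmemn n hn)).2.2.2.2
      have e : 2 * ((n:ℂ)+1)^2 * (h (1/((n:ℂ)+1), z) - h (0, z)
        - (1/((n:ℂ)+1)) * deriv (fun w => h (w, z)) 0) - deriv (deriv (fun w => h (w, z))) 0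
        = 2 * ((n:ℂ)+1)^2 * (h (1/((n:ℂ)+1), z) - h (0, z)
          - (1/((n:ℂ)+1)) * deriv (fun w => h (w, z)) 0
          - (1/((n:ℂ)+1))^2/2 * deriv (deriv (fun w => h (w, z))) 0) := by
        have := hne n
        field_simp
      rw [e, norm_mul, norm_mul, norm_pow, hnorm1]
      rw [hnn] at this
      have hp : (0:ℝ) < (n:ℝ)+1 := by positivity
      calc _ ≤ ‖(2:ℂ)‖ * ((n:ℝ)+1)^2 * (C * (1/((n:ℝ)+1))^3) := by gcongr
        _ = _ := by simp; field_simp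
  refine ⟨R/8, C, by positivity, hC0, by linarith, D0, D1, D2, ?_⟩
  intro z hz
  refine ⟨(hdw z (s8 hz)).mono s8, fun w hw => ?_⟩
  obtain ⟨x1, x2, x3, x4, _⟩ := hT z (s8 hz) w hw
  exact ⟨x1, x2, x3, x4⟩

lemma multilin_span (m : ℕ) (q : ContinuousMultilinearMap ℝ (fun _ : Fin m => ℂ) ℝ) :
    (fun y : ℂ => ((q fun _ => y : ℝ) : ℂ)) ∈ Submodule.span ℂ
      {φ : ℂ → ℂ | ∃ a b : ℕ, a + b = m ∧ φ = fun y => y ^ a * (starRingEnd ℂ y) ^ b} := by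
  induction m with
  | zero =>
    have : (fun y : ℂ => ((q fun _ => y : ℝ) : ℂ))
        = ((q fun _ => 0 : ℝ) : ℂ) • (fun y : ℂ => y ^ 0 * (starRingEnd ℂ y) ^ 0) := by
      ext y
      have : (fun _ : Fin 0 => y) = fun _ => (0:ℂ) := Subsingleton.elim _ _
      simp [this]
    rw [this]
    exact Submodule.smul_mem _ _ (Submodule.subset_span ⟨0, 0, rfl, rfl⟩)
  | succ m ih =>
    have key : ∀ φ ∈ Submodule.span ℂ
      {φ : ℂ → ℂ | ∃ a b : ℕ, a + b = m ∧ φ = fun y => y ^ a * (starRingEnd ℂ y) ^ b},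
      ∀ α γ : ℂ, (fun y => (α * y + γ * starRingEnd ℂ y) * φ y) ∈ Submodule.span ℂ
      {φ : ℂ → ℂ | ∃ a b : ℕ, a + b = m + 1 ∧ φ = fun y => y ^ a * (starRingEnd ℂ y) ^ b} := by
      intro φ hφ α γ
      induction hφ using Submodule.span_induction with
      | mem φ hφ =>
        obtain ⟨a, b, hab, rfl⟩ := hφ
        have : (fun y : ℂ => (α * y + γ * starRingEnd ℂ y) * (y ^ a * (starRingEnd ℂ y) ^ b))
          = α • (fun y : ℂ => y ^ (a+1) * (starRingEnd ℂ y) ^ b)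
            + γ • (fun y : ℂ => y ^ a * (starRingEnd ℂ y) ^ (b+1)) := by
          ext y; simp only [Pi.add_apply, Pi.smul_apply, smul_eq_mul]; ring
        rw [this]
        exact Submodule.add_mem _
          (Submodule.smul_mem _ _ (Submodule.subset_span ⟨a+1, b, by omega, rfl⟩))
          (Submodule.smul_mem _ _ (Submodule.subset_span ⟨a, b+1, by omega, rfl⟩))
      | zero =>
        have : (fun y : ℂ => (α * y + γ * starRingEnd ℂ y) * (0 : ℂ → ℂ) y) = 0 := by
          ext y; simp
        rw [this]; exact Submodule.zero_mem _
      | add x y _ _ hx hy =>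
        have : (fun z : ℂ => (α * z + γ * starRingEnd ℂ z) * (x + y) z)
          = (fun z : ℂ => (α * z + γ * starRingEnd ℂ z) * x z)
            + (fun z : ℂ => (α * z + γ * starRingEnd ℂ z) * y z) := by
          ext z; simp only [Pi.add_apply]; ring
        rw [this]; exact Submodule.add_mem _ hx hy
      | smul c x _ hx =>
        have : (fun z : ℂ => (α * z + γ * starRingEnd ℂ z) * (c • x) z)
          = c • (fun z : ℂ => (α * z + γ * starRingEnd ℂ z) * x z) := by
          ext z; simp only [Pi.smul_apply, smul_eq_mul]; ring
        rw [this]; exact Submodule.smul_mem _ _ hx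
    have h1 := key _ (ih (q.curryLeft 1)) (1/2) (1/2)
    have h2 := key _ (ih (q.curryLeft I)) (-I/2) (I/2)
    have := Submodule.add_mem _ h1 h2
    convert this using 1
    ext y
    have e0 : (q fun _ => y) = q.curryLeft y (fun _ => y) := by
      rw [ContinuousMultilinearMap.curryLeft_apply]
      congr 1
      ext i
      refine Fin.cases ?_ (fun j => ?_) i <;> simp
    have e1 : q.curryLeft y = y.re • q.curryLeft 1 + y.im • q.curryLeft I := by
      have : y = y.re • (1:ℂ) + y.im • I := by
        apply Complex.ext <;> simp
      conv_lhs => rw [this]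
      rw [map_add, map_smul, map_smul]
    rw [e0, e1]
    simp only [Pi.add_apply, _root_.add_apply,
      _root_.smul_apply, smul_eq_mul]
    push_cast
    have r1 : (y.re : ℂ) = 1/2 * y + 1/2 * starRingEnd ℂ y := by
      rw [Complex.re_eq_add_conj]; ring
    have r2 : (y.im : ℂ) = -I/2 * y + I/2 * starRingEnd ℂ y := by
      rw [Complex.im_eq_sub_conj]
      have := Complex.I_ne_zero
      field_simp
      have h := Complex.I_sq
      linear_combination (y - starRingEnd ℂ y) * h
    rw [← r1, ← r2]

lemma alt_sum_zero (n m : ℕ) (hm : m < n) (ω : ℂ) (hω : IsPrimitiveRoot ω (2 * n))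
    (hωn : ω ^ n = -1) (hωc : ω * starRingEnd ℂ ω = 1) (y : ℂ)
    (q : ContinuousMultilinearMap ℝ (fun _ : Fin m => ℂ) ℝ) :
    ∑ j ∈ Finset.range (2 * n), (-1 : ℝ) ^ j * (q fun _ => ω ^ j * y) = 0 := by
  have key : ∀ φ ∈ Submodule.span ℂ
      {φ : ℂ → ℂ | ∃ a b : ℕ, a + b = m ∧ φ = fun y => y ^ a * (starRingEnd ℂ y) ^ b},
      ∑ j ∈ Finset.range (2 * n), (-1 : ℂ) ^ j * φ (ω ^ j * y) = 0 := by
    intro φ hφ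
    induction hφ using Submodule.span_induction with
    | mem φ hφ =>
      obtain ⟨a, b, hab, rfl⟩ := hφ
      have hs : n + a - b ≠ 0 := by omega
      have hs2 : n + a - b < 2 * n := by omega
      set ρ := ω ^ (n + a - b) with hρ
      have hρ1 : ρ ≠ 1 := hω.pow_ne_one_of_pos_of_lt hs hs2
      have hρ2 : ρ = -1 * ω ^ a * (starRingEnd ℂ ω) ^ b := by
        have : ω ^ (n + a - b) * (ω ^ b * (starRingEnd ℂ ω) ^ b)
          = -1 * ω ^ a * (starRingEnd ℂ ω) ^ b := by
          rw [← mul_assoc, ← pow_add, Nat.sub_add_cancel (by omega), pow_add, hωn]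
        rw [← mul_pow, hωc, one_pow, mul_one] at this
        exact this
      have e : ∀ j ∈ Finset.range (2*n), (-1 : ℂ) ^ j * ((ω ^ j * y) ^ a * (starRingEnd ℂ (ω ^ j * y)) ^ b)
          = (y ^ a * (starRingEnd ℂ y) ^ b) * ρ ^ j := by
        intro j _
        rw [hρ2]; simp only [map_mul, map_pow, mul_pow, ← pow_mul]
        rw [mul_comm j a, mul_comm j b]; ring
      rw [Finset.sum_congr rfl e, ← Finset.mul_sum, geom_sum_eq hρ1]
      have : ρ ^ (2*n) = 1 := by
        rw [hρ, ← pow_mul, mul_comm, pow_mul, hω.pow_eq_one, one_pow]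
      rw [this]; simp
    | zero => simp
    | add x z _ _ hx hy =>
      simp only [Pi.add_apply, mul_add, Finset.sum_add_distrib, hx, hy, add_zero]
    | smul c x _ hx =>
      have : ∀ j ∈ Finset.range (2*n), (-1 : ℂ) ^ j * (c • x) (ω ^ j * y)
        = c * ((-1 : ℂ) ^ j * x (ω ^ j * y)) := by
        intro j _; simp only [Pi.smul_apply, smul_eq_mul]; ring
      rw [Finset.sum_congr rfl this, ← Finset.mul_sum, hx, mul_zero]
  have := key _ (multilin_span m q)
  have h2 : ((∑ j ∈ Finset.range (2 * n), (-1 : ℝ) ^ j * (q fun _ => ω ^ j * y) : ℝ) : ℂ) = 0 := by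
    push_cast; exact this
  exact_mod_cast h2

lemma alt_sum (n : ℕ) (hn : 0 < n) (A : ℂ → ℝ) (hA : AnalyticAt ℝ A 0) (ω : ℂ)
    (hω : IsPrimitiveRoot ω (2 * n)) (hωn : ω ^ n = -1) (hω1 : ‖ω‖ = 1) (η : ℂ) (hη : ‖η‖ = 1) :
    ∃ C δ : ℝ, 0 ≤ C ∧ 0 < δ ∧ ∀ r ∈ Ioo 0 δ,
      |∑ j ∈ Finset.range (2 * n), (-1 : ℝ) ^ j * A (r * (ω ^ j * η))| ≤ C * r ^ n := by
  obtain ⟨p, hp⟩ := hA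
  obtain ⟨C, hC, hO⟩ := (hp.isBigO_sub_partialSum_pow n).exists_pos
  rw [Asymptotics.isBigOWith_iff] at hO
  obtain ⟨δ, hδ, hb⟩ := Metric.eventually_nhds_iff_ball.mp hO
  have hωc : ω * starRingEnd ℂ ω = 1 := by
    rw [Complex.mul_conj, Complex.normSq_eq_norm_sq, hω1]; simp
  refine ⟨2 * n * C, δ, by positivity, hδ, ?_⟩
  intro r hr
  have hz : ∀ j : ℕ, ‖(r:ℂ) * (ω ^ j * η)‖ = r := by
    intro j; simp [hω1, hη, abs_of_pos hr.1]
  have h0 : ∑ j ∈ Finset.range (2 * n), (-1 : ℝ) ^ j * p.partialSum n (r * (ω ^ j * η)) = 0 := by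
    simp only [FormalMultilinearSeries.partialSum, Finset.mul_sum]
    rw [Finset.sum_comm]
    apply Finset.sum_eq_zero
    intro m hm
    have := alt_sum_zero n m (Finset.mem_range.mp hm) ω hω hωn hωc (r * η) (p m)
    rw [← this]
    apply Finset.sum_congr rfl
    intro j _
    rw [show (r:ℂ) * (ω ^ j * η) = ω ^ j * (r * η) by ring]
  rw [← sub_zero (∑ j ∈ Finset.range (2 * n), (-1 : ℝ) ^ j * A (r * (ω ^ j * η))), ← h0,
    ← Finset.sum_sub_distrib]
  refine (Finset.abs_sum_le_sum_abs _ _).trans ?_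
  have : ∀ j ∈ Finset.range (2 * n), |(-1 : ℝ) ^ j * A (r * (ω ^ j * η)) -
      (-1 : ℝ) ^ j * p.partialSum n (r * (ω ^ j * η))| ≤ C * r ^ n := by
    intro j _
    rw [← mul_sub, abs_mul, abs_pow, abs_neg, abs_one, one_pow, one_mul]
    have := hb (r * (ω ^ j * η)) (by rw [mem_ball_zero_iff, hz]; exact hr.2)
    rw [hz, zero_add] at this
    simpa [abs_of_pos hr.1] using this
  refine (Finset.sum_le_sum this).trans ?_
  simp [mul_assoc]

lemma FlatAt.le_pow {P : ℂ → ℝ} (hP : FlatAt P) (m : ℕ) :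
    ∃ ρ > 0, ∀ z ∈ ball (0:ℂ) ρ, |P z| ≤ ‖z‖ ^ m := by
  have h : P =o[nhds 0] fun z => ‖z‖ ^ m := by
    refine (hP (m+1)).trans_isLittleO ?_
    have := (Asymptotics.isLittleO_pow_pow (𝕜 := ℝ) (Nat.lt_succ_self m)).comp_tendsto
      (tendsto_norm_zero (E := ℂ))
    exact this
  have := h.bound (c := 1) one_pos
  obtain ⟨ρ, hρ, hb⟩ := Metric.eventually_nhds_iff_ball.mp this
  exact ⟨ρ, hρ, fun z hz => by simpa using hb z hz⟩

lemma max_lemma (δ C : ℝ) (hδ : 0 < δ) (P q : ℂ → ℝ) (hP0 : P 0 = 0)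
    (hpos : ∀ z ∈ ball (0:ℂ) δ, z ≠ 0 → 0 < P z) (hflat : FlatAt P)
    (hPd : ∀ z ∈ ball (0:ℂ) δ, DifferentiableAt ℝ P z)
    (hqd : ∀ z ∈ ball (0:ℂ) δ, DifferentiableAt ℝ q z)
    (hq : ∀ z ∈ ball (0:ℂ) δ, |fderiv ℝ q z z| ≤ C)
    (hcrit : ∀ z ∈ ball (0:ℂ) δ, z ≠ 0 → fderiv ℝ P z (I * z) = P z * fderiv ℝ q z (I * z) →
      fderiv ℝ P z z ≤ C * P z) : False := by
  obtain ⟨K, hK⟩ := exists_nat_gt (max (2 * C) 1)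
  have hK1 : (1:ℝ) < K := (le_max_right _ _).trans_lt hK
  have hK2 : 2 * C < K := (le_max_left _ _).trans_lt hK
  have hK0 : K ≠ 0 := by rintro rfl; norm_num at hK1
  set U : ℂ → ℝ := fun z => P z * Real.exp (- q z) with hU
  have hUd : ∀ z ∈ ball (0:ℂ) δ, HasFDerivAt U
      (P z • (Real.exp (- q z) • (- fderiv ℝ q z)) + Real.exp (- q z) • fderiv ℝ P z) z := by
    intro z hz
    exact (hPd z hz).hasFDerivAt.mul ((hqd z hz).hasFDerivAt.neg.exp)
  set Φ : ℂ → ℝ := fun z => U z / ‖z‖ ^ K with hΦ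
  have hsub : closedBall (0:ℂ) (δ/2) ⊆ ball 0 δ := closedBall_subset_ball (by linarith)
  have hΦ0 : Φ 0 = 0 := by simp [hΦ, hU, hP0]
  have hcont : ContinuousOn Φ (closedBall 0 (δ/2)) := by
    intro z hz
    apply ContinuousAt.continuousWithinAt
    by_cases hz0 : z = 0
    · subst hz0
      have h1 : ContinuousAt (fun z => Real.exp (- q z)) 0 :=
        ((hqd 0 (by simpa using hδ)).continuousAt.neg).rexp
      have h2 : Tendsto (fun z => P z / ‖z‖ ^ K) (nhds 0) (nhds 0) := by
        have h : P =o[nhds 0] fun z => ‖z‖ ^ K := by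
          refine (hflat (K+1)).trans_isLittleO ?_
          have := (Asymptotics.isLittleO_pow_pow (𝕜 := ℝ) (Nat.lt_succ_self K)).comp_tendsto
            (tendsto_norm_zero (E := ℂ))
          exact this
        exact h.tendsto_div_nhds_zero
      have h3 := h2.mul h1.tendsto
      rw [zero_mul] at h3
      unfold ContinuousAt
      rw [hΦ0]
      refine h3.congr fun z => ?_
      simp only [hΦ, hU]; ring
    · exact (hUd z (hsub hz)).continuousAt.div (by fun_prop)
        (pow_ne_zero _ (norm_ne_zero_iff.mpr hz0))
  obtain ⟨z0, hz0, hmax⟩ := (isCompact_closedBall (0:ℂ) (δ/2)).exists_isMaxOn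
    ⟨0, by simp; positivity⟩ hcont
  have hz00 : z0 ≠ 0 := by
    rintro rfl
    have h1 : ((δ/2 : ℝ) : ℂ) ∈ closedBall (0:ℂ) (δ/2) := by
      simp [abs_of_pos hδ]
    have h1n : ((δ/2 : ℝ) : ℂ) ≠ 0 := by
      exact_mod_cast (by positivity : (δ/2) ≠ 0)
    have h2 := hmax h1
    simp only [Set.mem_ofPred_eq] at h2
    rw [hΦ0] at h2
    have : 0 < Φ ((δ/2 : ℝ) : ℂ) := by
      have := hpos _ (hsub h1) h1n
      have : 0 < ‖((δ/2 : ℝ) : ℂ)‖ := norm_pos_iff.mpr h1n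
      simp only [hΦ, hU]; positivity
    linarith
  have hzb := hsub hz0
  have hzn : 0 < ‖z0‖ := norm_pos_iff.mpr hz00
  have hPz := hpos z0 hzb hz00
  have hD := hUd z0 hzb
  -- angular derivative
  have hang : fderiv ℝ P z0 (I * z0) = P z0 * fderiv ℝ q z0 (I * z0) := by
    have hc : HasDerivAt (fun θ : ℝ => Complex.exp (θ * I) * z0) (I * z0) 0 := by
      have : HasDerivAt (fun θ : ℝ => Complex.exp (θ * I) * z0)
        (Complex.exp (((0:ℝ):ℂ) * I) * (1 * I) * z0) 0 :=
        (((Complex.ofRealCLM.hasDerivAt (x := (0:ℝ))).mul_const I).cexp).mul_const z0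
      simpa using this
    have hcomp : HasDerivAt (fun θ : ℝ => U (Complex.exp (θ * I) * z0)) _ 0 :=
      HasFDerivAt.comp_hasDerivAt_of_eq 0 hD hc (by simp)
    have hm : IsLocalMax (fun θ : ℝ => U (Complex.exp (θ * I) * z0)) 0 := by
      refine Eventually.of_forall fun θ => ?_
      have hn : ‖Complex.exp (θ * I) * z0‖ = ‖z0‖ := by
        rw [norm_mul, Complex.norm_exp_ofReal_mul_I, one_mul]
      have := hmax (show Complex.exp (θ * I) * z0 ∈ closedBall (0:ℂ) (δ/2) by
        rw [mem_closedBall_zero_iff, hn]; simpa using hz0)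
      simp only [Set.mem_ofPred_eq, hΦ, hn] at this
      simp only [ofReal_zero, zero_mul, Complex.exp_zero, one_mul]
      exact (div_le_div_iff_of_pos_right (by positivity)).mp this
    have h0 := hm.hasDerivAt_eq_zero hcomp
    simp only [_root_.add_apply, _root_.smul_apply, _root_.neg_apply, smul_eq_mul] at h0
    have he := Real.exp_pos (- q z0)
    have : Real.exp (- q z0) * (fderiv ℝ P z0 (I * z0) - P z0 * fderiv ℝ q z0 (I * z0)) = 0 := by
      linarith
    rcases mul_eq_zero.mp this with h | h
    · exact absurd h he.ne'
    · linarith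
  have hrad := hcrit z0 hzb hz00 hang
  -- radial derivative
  have hc2 : HasDerivAt (fun s : ℝ => (s:ℂ) * z0) z0 1 := by
    simpa using (Complex.ofRealCLM.hasDerivAt (x := (1:ℝ))).mul_const z0
  have hcomp2 : HasDerivAt (fun s : ℝ => U ((s:ℂ) * z0)) _ 1 :=
      HasFDerivAt.comp_hasDerivAt_of_eq 1 hD hc2 (by simp)
  have hG := ((hasDerivAt_pow K (1:ℝ)).mul_const (U z0)).sub hcomp2
  have hG' := hG.hasDerivWithinAt (s := Iio 1)
  rw [hasDerivWithinAt_iff_tendsto_slope' (by simp)] at hG'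
  have hle := le_of_tendsto (b := (0:ℝ)) hG' (by
    have : ∀ᶠ s : ℝ in nhdsWithin 1 (Iio 1), 0 < s :=
      (eventually_gt_nhds (by norm_num : (0:ℝ) < 1)).filter_mono nhdsWithin_le_nhds
    filter_upwards [this, self_mem_nhdsWithin] with s hs0 hs1
    have hs1' : s < 1 := hs1
    have hn : ‖(s:ℂ) * z0‖ = s * ‖z0‖ := by simp [abs_of_pos hs0]
    have := hmax (show (s:ℂ) * z0 ∈ closedBall (0:ℂ) (δ/2) by
        rw [mem_closedBall_zero_iff, hn]
        have : ‖z0‖ ≤ δ/2 := by simpa using hz0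
        nlinarith)
    simp only [Set.mem_ofPred_eq, hΦ, hn] at this
    rw [mul_pow, div_le_div_iff₀ (by positivity) (by positivity)] at this
    have h3 : U (s * z0) ≤ s ^ K * U z0 := by
      have hp : 0 < ‖z0‖ ^ K := by positivity
      have : U (s * z0) * ‖z0‖ ^ K ≤ (s ^ K * U z0) * ‖z0‖ ^ K := by linarith
      exact le_of_mul_le_mul_right this hp
    rw [slope_def_field]
    simp only [Pi.sub_apply, one_pow, one_mul, ofReal_one, sub_self, sub_zero]
    apply div_nonpos_of_nonneg_of_nonpos
    · simpa using h3
    · linarith)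
  simp only [_root_.add_apply, _root_.smul_apply, _root_.neg_apply, smul_eq_mul,
    one_pow, mul_one] at hle
  have he := Real.exp_pos (- q z0)
  have hqq := (abs_le.mp (hq z0 hzb)).1
  have e1 : Real.exp (- q z0) * (K * P z0 - fderiv ℝ P z0 z0 + P z0 * fderiv ℝ q z0 z0) ≤ 0 := by
    simp only [hU] at hle
    nlinarith
  have e2 : K * P z0 - fderiv ℝ P z0 z0 + P z0 * fderiv ℝ q z0 z0 ≤ 0 := by
    by_contra hh
    push Not at hh
    nlinarith [mul_pos he hh]
  nlinarith [mul_le_mul_of_nonneg_left hqq hPz.le, mul_lt_mul_of_pos_right hK2 hPz]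

lemma clm_complex (D : ℂ →L[ℝ] ℝ) (l z : ℂ) : D (l * z) = l.re * D z + l.im * D (I * z) := by
  have : l * z = l.re • z + l.im • (I * z) := by
    conv_lhs => rw [← Complex.re_add_im l]
    simp only [Complex.real_smul]; ring
  rw [this, map_add, map_smul, map_smul]; rfl

set_option maxHeartbeats 1000000 in
lemma rays_lemma {ι : Type} (J : Finset ι) (hJ : J.Nonempty) (δ C : ℝ) (hδ : 0 < δ) (hC : 0 ≤ C)
    (P A : ℂ → ℝ) (Γ : ℂ → ℂ) (n : ℤ) (η : ι → ℂ) (ε : ι → ℝ) (τ : ℂ)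
    (hpos : ∀ z ∈ ball (0:ℂ) δ, z ≠ 0 → 0 < P z) (hflat : FlatAt P)
    (hPd : ∀ z ∈ ball (0:ℂ) δ, DifferentiableAt ℝ P z)
    (hΓ : ContDiffAt ℝ 1 Γ 0)
    (hη : ∀ j ∈ J, ‖η j‖ = 1) (hε : ∀ j ∈ J, ε j ^ 2 = 1) (hητ : ∀ j ∈ J, η j ^ n = ε j * τ)
    (hτ : 0 < (τ * Γ 0).re)
    (hD : ∀ z ∈ ball (0:ℂ) δ, z ≠ 0 →
      |fderiv ℝ P z (z ^ n * Γ z * z) + P z * A z| ≤ C * P z * ‖z‖ ^ n)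
    (hθ : ∀ z ∈ ball (0:ℂ) δ, z ≠ 0 → |fderiv ℝ P z (I * z)| ≤ C * P z)
    (hA : ∀ r ∈ Ioo 0 δ, |∑ j ∈ J, ε j * A (r * η j)| ≤ C * r ^ n) : False := by
  -- local control of `Γ`
  set c := (τ * Γ 0).re / 2 with hc
  have hcpos : 0 < c := by positivity
  set M := ‖τ * Γ 0‖ + 1 with hM
  set K := ‖τ‖ * (‖fderiv ℝ Γ 0‖ + 1) with hK
  have hKpos : 0 ≤ K := by positivity
  have hMpos : 0 ≤ M := by positivity
  have hev : ∀ᶠ z in nhds (0:ℂ), DifferentiableAt ℝ Γ z ∧ c ≤ (τ * Γ z).re ∧ ‖τ * Γ z‖ ≤ M ∧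
      ‖fderiv ℝ Γ z‖ ≤ ‖fderiv ℝ Γ 0‖ + 1 := by
    have h1 : ∀ᶠ z in nhds (0:ℂ), DifferentiableAt ℝ Γ z := by
      filter_upwards [hΓ.eventually (by simp)] with z hz using hz.differentiableAt (by norm_num)
    have hct : ContinuousAt (fun z => τ * Γ z) 0 := continuousAt_const.mul hΓ.continuousAt
    have h2 : ∀ᶠ z in nhds (0:ℂ), c < (τ * Γ z).re := by
      apply (Complex.continuous_re.continuousAt.comp hct).tendsto.eventually_const_lt
      simp only [Function.comp, hc]; linarith
    have h3 : ∀ᶠ z in nhds (0:ℂ), ‖τ * Γ z‖ < M := by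
      apply hct.norm.tendsto.eventually_lt_const; simp [hM]
    have h4 : ∀ᶠ z in nhds (0:ℂ), ‖fderiv ℝ Γ z‖ < ‖fderiv ℝ Γ 0‖ + 1 := by
      have := (hΓ.fderiv_right (m := 0) (by norm_num)).continuousAt
      apply this.norm.tendsto.eventually_lt_const; simp
    filter_upwards [h1, h2, h3, h4] with z a b c d using ⟨a, b.le, c.le, d.le⟩
  obtain ⟨ρ1, hρ1, hb1⟩ := Metric.eventually_nhds_iff_ball.mp hev
  obtain ⟨ρ2, hρ2, hb2⟩ := hflat.le_pow 1
  set δ' := min (min ρ1 ρ2) (min δ 1) with hδ'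
  have hδ'pos : 0 < δ' := by simp only [hδ']; positivity
  have le1 : δ' ≤ ρ1 := (min_le_left _ _).trans (min_le_left _ _)
  have le2 : δ' ≤ ρ2 := (min_le_left _ _).trans (min_le_right _ _)
  have le3 : δ' ≤ δ := (min_le_right _ _).trans (min_le_left _ _)
  have le4 : δ' ≤ 1 := (min_le_right _ _).trans (min_le_right _ _)
  have hnz : ∀ j ∈ J, ∀ r : ℝ, 0 < r → ‖(r:ℂ) * η j‖ = r := by
    intro j hj r hr; simp [hη j hj, abs_of_pos hr]
  have hne : ∀ j ∈ J, ∀ r : ℝ, 0 < r → (r:ℂ) * η j ≠ 0 := by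
    intro j hj r hr; rw [← norm_pos_iff, hnz j hj r hr]; exact hr
  have hin : ∀ j ∈ J, ∀ r ∈ Ioo 0 δ', ∀ R, δ' ≤ R → (r:ℂ) * η j ∈ ball (0:ℂ) R := by
    intro j hj r hr R hR
    rw [mem_ball_zero_iff, hnz j hj r hr.1]; exact hr.2.trans_le hR
  set L : ι → ℝ → ℝ := fun j r => Real.log (P (r * η j)) with hL
  set w : ι → ℝ → ℝ := fun j r => (τ * Γ (r * η j)).re with hw
  set w' : ι → ℝ → ℝ := fun j r => (τ * fderiv ℝ Γ (r * η j) (η j)).re with hw'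
  set L' : ι → ℝ → ℝ := fun j r => fderiv ℝ P (r * η j) (η j) / P (r * η j) with hL'
  have hLneg : ∀ j ∈ J, ∀ r ∈ Ioo 0 δ', L j r ≤ 0 := by
    intro j hj r hr
    apply Real.log_nonpos
    · exact (hpos _ (hin j hj r hr δ le3) (hne j hj r hr.1)).le
    · have := hb2 _ (hin j hj r hr ρ2 le2)
      rw [pow_one, hnz j hj r hr.1] at this
      have := (le_abs_self _).trans this
      linarith [hr.2]
  have hline : ∀ j, ∀ r : ℝ, HasDerivAt (fun r : ℝ => (r:ℂ) * η j) (η j) r := by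
    intro j r
    simpa using (Complex.ofRealCLM.hasDerivAt (x := r)).mul_const (η j)
  have hwd : ∀ j ∈ J, ∀ r ∈ Ioo 0 δ', HasDerivAt (w j) (w' j r) r := by
    intro j hj r hr
    have h1 := (hb1 _ (hin j hj r hr ρ1 le1)).1.hasFDerivAt.comp_hasDerivAt r (hline j r)
    have h2 := Complex.reCLM.hasFDerivAt.comp_hasDerivAt r (h1.const_mul τ)
    exact h2
  have hLd : ∀ j ∈ J, ∀ r ∈ Ioo 0 δ', HasDerivAt (L j) (L' j r) r := by
    intro j hj r hr
    have h1 := (hPd _ (hin j hj r hr δ le3)).hasFDerivAt.comp_hasDerivAt r (hline j r)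
    exact h1.log (hpos _ (hin j hj r hr δ le3) (hne j hj r hr.1)).ne'
  have hwlow : ∀ j ∈ J, ∀ r ∈ Ioo 0 δ', c ≤ w j r := fun j hj r hr =>
    (hb1 _ (hin j hj r hr ρ1 le1)).2.1
  have hw'b : ∀ j ∈ J, ∀ r ∈ Ioo 0 δ', |w' j r| ≤ K := by
    intro j hj r hr
    refine (Complex.abs_re_le_norm _).trans ?_
    rw [norm_mul, hK]
    gcongr
    refine ((fderiv ℝ Γ (r * η j)).le_opNorm (η j)).trans ?_
    rw [hη j hj, mul_one]
    exact (hb1 _ (hin j hj r hr ρ1 le1)).2.2.2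
  set S : ℝ → ℝ := fun r => ∑ j ∈ J, w j r * L j r with hS
  set S' : ℝ → ℝ := fun r => ∑ j ∈ J, (w' j r * L j r + w j r * L' j r) with hS'
  have hSL : ∀ j ∈ J, ∀ r ∈ Ioo 0 δ', S r ≤ c * L j r := by
    intro j hj r hr
    have h1 : ∀ i ∈ J, w i r * L i r ≤ 0 := fun i hi =>
      mul_nonpos_of_nonneg_of_nonpos (hcpos.le.trans (hwlow i hi r hr)) (hLneg i hi r hr)
    have h2 : S r ≤ w j r * L j r := by
      have := Finset.single_le_sum (f := fun i => -(w i r * L i r)) (s := J)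
        (fun i hi => by linarith [h1 i hi]) hj
      simp only [Finset.sum_neg_distrib] at this
      simp only [hS]; linarith
    refine h2.trans ?_
    exact mul_le_mul_of_nonpos_right (hwlow j hj r hr) (hLneg j hj r hr)
  set C1 := C + J.card * (C + M * C) with hC1
  set C2 := J.card * (K / c) with hC2
  refine one_dim S S' δ' (max C1 C2) hδ'pos (le_max_of_le_left (by positivity)) ?_ ?_ ?_
  · intro r hr
    exact HasDerivAt.fun_sum fun j hj => (hwd j hj r hr).mul (hLd j hj r hr)
  · intro r hr
    have hr0 := hr.1
    have hrn : (0:ℝ) < r ^ n := zpow_pos hr0 n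
    have hSneg : S r ≤ 0 := by
      obtain ⟨j, hj⟩ := hJ
      refine (hSL j hj r hr).trans ?_
      exact mul_nonpos_of_nonneg_of_nonpos hcpos.le (hLneg j hj r hr)
    have p1 : ∀ j ∈ J, r * (w' j r * L j r) ≤ r * (K / c * (- S r)) := by
      intro j hj
      apply mul_le_mul_of_nonneg_left _ hr0.le
      have h1 : -L j r ≤ (- S r) / c := by
        rw [le_div_iff₀ hcpos]; linarith [hSL j hj r hr]
      have h2 := hw'b j hj r hr
      have h3 := hLneg j hj r hr
      calc w' j r * L j r ≤ |w' j r| * |L j r| := by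
            rw [← abs_mul]; exact le_abs_self _
        _ ≤ K * (-L j r) := by rw [abs_of_nonpos h3]; gcongr; linarith
        _ ≤ K * ((- S r)/c) := by gcongr
        _ = _ := by ring
    have p2 : ∀ j ∈ J, r * (w j r * L' j r) ≤
        - (ε j * A (r * η j)) / r ^ n + (C + M * C) := by
      intro j hj
      have hb := hin j hj r hr δ le3
      have hn0 := hne j hj r hr0
      have hPp := hpos _ hb hn0
      have h1 := hD _ hb hn0
      have h2 := hθ _ hb hn0
      have h3 : ‖τ * Γ (r * η j)‖ ≤ M := (hb1 _ (hin j hj r hr ρ1 le1)).2.2.1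
      rw [hnz j hj r hr0] at h1
      set z : ℂ := r * η j with hz
      set lam := τ * Γ z with hlam
      have e1 : z ^ n * Γ z * z = (r ^ n * ε j) • (lam * z) := by
        rw [Complex.real_smul, hz, mul_zpow, hητ j hj, hlam]; push_cast; ring
      rw [e1, map_smul, clm_complex, smul_eq_mul] at h1
      have e2 : fderiv ℝ P z z = r * fderiv ℝ P z (η j) := by
        calc fderiv ℝ P z z = fderiv ℝ P z (r • η j) := by rw [Complex.real_smul]
          _ = r * fderiv ℝ P z (η j) := by rw [map_smul, smul_eq_mul]
      have e3 : r * (w j r * L' j r) = lam.re * fderiv ℝ P z z / P z := by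
        rw [e2]; simp only [hw, hL', hlam, hz]; ring
      rw [e3]
      have him : |lam.im| ≤ M := (Complex.abs_im_le_norm _).trans h3
      have h4 : |lam.im * fderiv ℝ P z (I * z)| ≤ M * (C * P z) := by
        rw [abs_mul]; gcongr
      set X := lam.re * fderiv ℝ P z z
      set Y := lam.im * fderiv ℝ P z (I * z)
      have hεj := hε j hj
      have habs : |ε j| = 1 := by
        rw [← sq_abs] at hεj
        have := abs_nonneg (ε j)
        nlinarith
      have h5 : |r ^ n * (X + Y) + ε j * (P z * A z)| ≤ C * P z * r ^ n := by
        have : r ^ n * (X + Y) + ε j * (P z * A z)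
          = ε j * (r ^ n * ε j * (X + Y) + P z * A z) := by
          linear_combination (-(r ^ n * (X + Y))) * hεj
        rw [this, abs_mul, habs, one_mul]; exact h1
      have h6 := (abs_le.mp h5).2
      have h7 := (abs_le.mp h4).1
      rw [div_le_iff₀ hPp]
      have h8 : (-(ε j * A z) / r ^ n + (C + M * C)) * P z
        = (-(ε j * (P z * A z)) + (C + M * C) * P z * r ^ n) / r ^ n := by
        field_simp
      rw [h8, le_div_iff₀ hrn]
      have h9 := mul_le_mul_of_nonneg_right h7 hrn.le
      linarith
    have p3 : ∑ j ∈ J, - (ε j * A (r * η j)) / r ^ n ≤ C := by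
      rw [← Finset.sum_div, Finset.sum_neg_distrib, div_le_iff₀ hrn]
      have := hA r ⟨hr0, hr.2.trans_le le3⟩
      linarith [(abs_le.mp this).1]
    have p4 : r * S' r ≤ C1 + C2 * r * (- S r) := by
      simp only [hS', Finset.mul_sum]
      calc _ ≤ ∑ j ∈ J, (r * (K / c * (- S r)) + (- (ε j * A (r * η j)) / r ^ n + (C + M * C))) := by
            apply Finset.sum_le_sum
            intro j hj
            rw [mul_add]; exact add_le_add (p1 j hj) (p2 j hj)
        _ = J.card * (r * (K / c * (- S r))) + (∑ j ∈ J, - (ε j * A (r * η j)) / r ^ n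
              + J.card * (C + M * C)) := by
            rw [Finset.sum_add_distrib, Finset.sum_add_distrib, Finset.sum_const, Finset.sum_const,
              nsmul_eq_mul, nsmul_eq_mul]
        _ ≤ _ := by
            have e : C2 * r * (- S r) = J.card * (r * (K / c * (- S r))) := by rw [hC2]; ring
            rw [e, hC1]; linarith
    refine p4.trans ?_
    have h9 : 0 ≤ r * (- S r) := mul_nonneg hr0.le (by linarith)
    have := mul_le_mul_of_nonneg_right (le_max_right C1 C2) h9
    have := le_max_left C1 C2
    have e1 : C2 * r * (- S r) = C2 * (r * (- S r)) := by ring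
    have e2 : max C1 C2 * r * (- S r) = max C1 C2 * (r * (- S r)) := by ring
    rw [e1, e2]
    linarith
  · intro κ
    obtain ⟨m, hm⟩ := exists_nat_ge (κ / c)
    obtain ⟨ρ, hρ, hb⟩ := hflat.le_pow m
    obtain ⟨j, hj⟩ := hJ
    refine ⟨min ρ δ', lt_min hρ hδ'pos, fun r hr => ?_⟩
    have hr' : r ∈ Ioo 0 δ' := ⟨hr.1, hr.2.trans_le (min_le_right _ _)⟩
    have h1 := hb (r * η j) (by
      rw [mem_ball_zero_iff, hnz j hj r hr.1]; exact hr.2.trans_le (min_le_left _ _))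
    rw [hnz j hj r hr.1] at h1
    have hPp := hpos _ (hin j hj r hr' δ le3) (hne j hj r hr.1)
    have h2 : L j r ≤ m * Real.log r := by
      rw [← Real.log_pow]; exact Real.log_le_log hPp ((le_abs_self _).trans h1)
    have hlog : Real.log r ≤ 0 := Real.log_nonpos hr.1.le (by linarith [hr'.2])
    rw [div_le_iff₀ hcpos] at hm
    have h3 := hSL j hj r hr'
    nlinarith [mul_le_mul_of_nonneg_left h2 hcpos.le, mul_le_mul_of_nonpos_right hm hlog]

/-- Data extracted from the tangency equation (raw). -/
structure RawData (P g e : ℂ → ℝ) (a0 a1 a2 b1 H1 H1' H2 H2' : ℂ → ℂ) (β δ C : ℝ) : Prop where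
  hβ : β ≠ 0
  hδ : 0 < δ
  hC : 0 ≤ C
  P0 : P 0 = 0
  pos : ∀ z ∈ ball (0:ℂ) δ, z ≠ 0 → 0 < P z
  smooth : ∀ z ∈ ball (0:ℂ) δ, ContDiffAt ℝ 2 P z
  flat : FlatAt P
  gan : AnalyticOnNhd ℝ g (ball 0 δ)
  ean : AnalyticOnNhd ℝ e (ball 0 δ)
  da0 : DifferentiableOn ℂ a0 (ball 0 δ)
  da1 : DifferentiableOn ℂ a1 (ball 0 δ)
  da2 : DifferentiableOn ℂ a2 (ball 0 δ)
  db1 : DifferentiableOn ℂ b1 (ball 0 δ)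
  a00 : a0 0 = 0
  H1a : ∀ z ∈ ball (0:ℂ) δ, ‖H1 z - a0 z‖ ≤ C * P z
  H1b : ∀ z ∈ ball (0:ℂ) δ, ‖H1 z - a0 z + P z * a1 z‖ ≤ C * P z ^ 2
  H1'a : ∀ z ∈ ball (0:ℂ) δ, ‖H1' z - a1 z‖ ≤ C * P z
  H1'b : ∀ z ∈ ball (0:ℂ) δ, ‖H1' z - a1 z + P z * a2 z‖ ≤ C * P z ^ 2
  H2b : ∀ z ∈ ball (0:ℂ) δ, ‖H2 z - I * β * z + P z * b1 z‖ ≤ C * P z ^ 2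
  H2'a : ∀ z ∈ ball (0:ℂ) δ, ‖H2' z - b1 z‖ ≤ C * P z
  T0 : ∀ z ∈ ball (0:ℂ) δ, ((1 - I * g z) * H1 z).re + fderiv ℝ P z (H2 z) = 0
  T1 : ∀ z ∈ ball (0:ℂ) δ, (-I * e z * H1 z + (1 - I * g z) * ((I - g z) * H1' z)).re
    + fderiv ℝ P z ((I - g z) * H2' z) + fderiv ℝ g z (H2 z) = 0

lemma RawData.mono {P g e : ℂ → ℝ} {a0 a1 a2 b1 H1 H1' H2 H2' : ℂ → ℂ} {β δ C δ' C' : ℝ}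
    (h : RawData P g e a0 a1 a2 b1 H1 H1' H2 H2' β δ C) (h0 : 0 < δ') (hδ : δ' ≤ δ) (hC : C ≤ C') :
    RawData P g e a0 a1 a2 b1 H1 H1' H2 H2' β δ' C' := by
  have hs : ball (0:ℂ) δ' ⊆ ball 0 δ := ball_subset_ball hδ
  have hP : ∀ z ∈ ball (0:ℂ) δ, 0 ≤ P z := by
    intro z hz
    by_cases h0 : z = 0
    · rw [h0, h.P0]
    · exact (h.pos z hz h0).le
  have k1 : ∀ z ∈ ball (0:ℂ) δ, C * P z ≤ C' * P z := fun z hz =>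
    mul_le_mul_of_nonneg_right hC (hP z hz)
  have k2 : ∀ z ∈ ball (0:ℂ) δ, C * P z ^ 2 ≤ C' * P z ^ 2 := fun z hz =>
    mul_le_mul_of_nonneg_right hC (sq_nonneg _)
  exact
  { hβ := h.hβ
    hδ := h0
    hC := h.hC.trans hC
    P0 := h.P0
    pos := fun z hz => h.pos z (hs hz)
    smooth := fun z hz => h.smooth z (hs hz)
    flat := h.flat
    gan := h.gan.mono hs
    ean := h.ean.mono hs
    da0 := h.da0.mono hs
    da1 := h.da1.mono hs
    da2 := h.da2.mono hs
    db1 := h.db1.mono hs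
    a00 := h.a00
    H1a := fun z hz => (h.H1a z (hs hz)).trans (k1 z (hs hz))
    H1b := fun z hz => (h.H1b z (hs hz)).trans (k2 z (hs hz))
    H1'a := fun z hz => (h.H1'a z (hs hz)).trans (k1 z (hs hz))
    H1'b := fun z hz => (h.H1'b z (hs hz)).trans (k2 z (hs hz))
    H2b := fun z hz => (h.H2b z (hs hz)).trans (k2 z (hs hz))
    H2'a := fun z hz => (h.H2'a z (hs hz)).trans (k1 z (hs hz))
    T0 := fun z hz => h.T0 z (hs hz)
    T1 := fun z hz => h.T1 z (hs hz) }

/-- Uniform bounds. -/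
structure BData (P g e : ℂ → ℝ) (a0 a1 a2 b1 H1 H1' H2 H2' : ℂ → ℂ) (β δ C : ℝ) : Prop extends
    RawData P g e a0 a1 a2 b1 H1 H1' H2 H2' β δ C where
  Pn : ∀ z ∈ ball (0:ℂ) δ, 0 ≤ P z
  P1 : ∀ z ∈ ball (0:ℂ) δ, P z ≤ 1
  δ1 : δ ≤ 1
  βC : |β| ≤ C
  gb : ∀ z ∈ ball (0:ℂ) δ, |g z| ≤ C
  eb : ∀ z ∈ ball (0:ℂ) δ, |e z| ≤ C
  a1b : ∀ z ∈ ball (0:ℂ) δ, ‖a1 z‖ ≤ C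
  b1b : ∀ z ∈ ball (0:ℂ) δ, ‖b1 z‖ ≤ C
  DPb : ∀ z ∈ ball (0:ℂ) δ, ‖fderiv ℝ P z‖ ≤ C
  Dgb : ∀ z ∈ ball (0:ℂ) δ, ‖fderiv ℝ g z‖ ≤ C
  DPflat : FlatAt (fun z => ‖fderiv ℝ P z‖)

lemma BData.mono {P g e : ℂ → ℝ} {a0 a1 a2 b1 H1 H1' H2 H2' : ℂ → ℂ} {β δ C δ' : ℝ}
    (h : BData P g e a0 a1 a2 b1 H1 H1' H2 H2' β δ C) (h0 : 0 < δ') (hδ : δ' ≤ δ) :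
    BData P g e a0 a1 a2 b1 H1 H1' H2 H2' β δ' C := by
  have hs : ball (0:ℂ) δ' ⊆ ball 0 δ := ball_subset_ball hδ
  exact
  { h.toRawData.mono h0 hδ le_rfl with
    Pn := fun z hz => h.Pn z (hs hz)
    P1 := fun z hz => h.P1 z (hs hz)
    δ1 := hδ.trans h.δ1
    βC := h.βC
    gb := fun z hz => h.gb z (hs hz)
    eb := fun z hz => h.eb z (hs hz)
    a1b := fun z hz => h.a1b z (hs hz)
    b1b := fun z hz => h.b1b z (hs hz)
    DPb := fun z hz => h.DPb z (hs hz)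
    Dgb := fun z hz => h.Dgb z (hs hz)
    DPflat := h.DPflat }

lemma RawData.toB {P g e : ℂ → ℝ} {a0 a1 a2 b1 H1 H1' H2 H2' : ℂ → ℂ} {β δ C : ℝ}
    (h : RawData P g e a0 a1 a2 b1 H1 H1' H2 H2' β δ C) :
    ∃ δ' C', BData P g e a0 a1 a2 b1 H1 H1' H2 H2' β δ' C' := by
  have h0 : (0:ℂ) ∈ ball (0:ℂ) δ := by simpa using h.hδ
  have hnh : ball (0:ℂ) δ ∈ nhds 0 := ball_mem_nhds 0 h.hδ
  have hPn : ∀ z ∈ ball (0:ℂ) δ, 0 ≤ P z := by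
    intro z hz
    by_cases h0 : z = 0
    · rw [h0, h.P0]
    · exact (h.pos z hz h0).le
  have bdd : ∀ {E : Type} [NormedAddCommGroup E] (F : ℂ → E), ContinuousAt F 0 →
      ∀ᶠ z in nhds (0:ℂ), ‖F z‖ ≤ ‖F 0‖ + 1 := by
    intro E _ F hF
    have := hF.norm.tendsto.eventually_lt_const (lt_add_one _)
    filter_upwards [this] with z hz using hz.le
  have cP : ContinuousAt P 0 := (h.smooth 0 h0).continuousAt
  have ev1 : ∀ᶠ z in nhds (0:ℂ), P z < 1 := cP.tendsto.eventually_lt_const (by rw [h.P0]; norm_num)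
  have ev2 := bdd g (h.gan 0 h0).continuousAt
  have ev3 := bdd e (h.ean 0 h0).continuousAt
  have ev4 := bdd a1 (h.da1.continuousOn.continuousAt hnh)
  have ev5 := bdd b1 (h.db1.continuousOn.continuousAt hnh)
  have ev6 := bdd (fderiv ℝ P) ((h.smooth 0 h0).fderiv_right (m := 1) (by norm_num)).continuousAt
  have ev7 := bdd (fderiv ℝ g) (h.gan 0 h0).fderiv.continuousAt
  obtain ⟨ρ, hρ, hb⟩ := Metric.eventually_nhds_iff_ball.mp
    (ev1.and (ev2.and (ev3.and (ev4.and (ev5.and (ev6.and ev7))))))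
  set C' := C + |β| + (‖g 0‖ + 1) + (‖e 0‖ + 1) + (‖a1 0‖ + 1) + (‖b1 0‖ + 1)
    + (‖fderiv ℝ P 0‖ + 1) + (‖fderiv ℝ g 0‖ + 1) with hC'
  have n1 := h.hC
  have n2 := abs_nonneg β
  have n3 := norm_nonneg (g 0)
  have n4 := norm_nonneg (e 0)
  have n5 := norm_nonneg (a1 0)
  have n6 := norm_nonneg (b1 0)
  have n7 := norm_nonneg (fderiv ℝ P 0)
  have n8 := norm_nonneg (fderiv ℝ g 0)
  have l1 : min ρ (min δ 1) ≤ ρ := min_le_left _ _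
  have l2 : min ρ (min δ 1) ≤ δ := (min_le_right _ _).trans (min_le_left _ _)
  have l3 : min ρ (min δ 1) ≤ 1 := (min_le_right _ _).trans (min_le_right _ _)
  have hs := ball_subset_ball (x := (0:ℂ)) l1
  have hs2 := ball_subset_ball (x := (0:ℂ)) l2
  refine ⟨min ρ (min δ 1), C', ?_⟩
  exact
  { h.mono (lt_min hρ (lt_min h.hδ one_pos)) l2 (by linarith : C ≤ C') with
    Pn := fun z hz => hPn z (hs2 hz)
    P1 := fun z hz => (hb z (hs hz)).1.le
    δ1 := l3
    βC := by linarith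
    gb := fun z hz => by
      have := (hb z (hs hz)).2.1
      rw [Real.norm_eq_abs] at this; linarith
    eb := fun z hz => by
      have := (hb z (hs hz)).2.2.1
      rw [Real.norm_eq_abs] at this; linarith
    a1b := fun z hz => by have := (hb z (hs hz)).2.2.2.1; linarith
    b1b := fun z hz => by have := (hb z (hs hz)).2.2.2.2.1; linarith
    DPb := fun z hz => by have := (hb z (hs hz)).2.2.2.2.2.1; linarith
    Dgb := fun z hz => by have := (hb z (hs hz)).2.2.2.2.2.2; linarith
    DPflat := flat_fderiv P (h.smooth 0 h0) (by
      filter_upwards [hnh] with z hz using hPn z hz) h.flat }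

lemma FlatAt.of_le {F Q R : ℂ → ℝ} (hQ : FlatAt Q) (hR : FlatAt R) (K δ : ℝ) (hδ : 0 < δ)
    (h : ∀ z ∈ ball (0:ℂ) δ, |F z| ≤ K * (Q z + R z)) : FlatAt F := by
  intro n
  refine Asymptotics.IsBigO.trans ?_ ((hQ n).add (hR n))
  refine Asymptotics.IsBigO.of_bound |K| ?_
  filter_upwards [ball_mem_nhds (0:ℂ) hδ] with z hz
  rw [Real.norm_eq_abs, Real.norm_eq_abs, ← abs_mul]
  exact (h z hz).trans (le_abs_self _)

lemma BData.H2c {P g e : ℂ → ℝ} {a0 a1 a2 b1 H1 H1' H2 H2' : ℂ → ℂ} {β δ C : ℝ}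
    (h : BData P g e a0 a1 a2 b1 H1 H1' H2 H2' β δ C) {z : ℂ} (hz : z ∈ ball (0:ℂ) δ) :
    ‖H2 z - I * β * z‖ ≤ 2 * C * P z := by
  have h1 := h.H2b z hz
  have h2 := h.Pn z hz
  have h3 := h.P1 z hz
  have h4 : ‖(P z : ℂ) * b1 z‖ ≤ P z * C := by
    rw [norm_mul, Complex.norm_real, Real.norm_eq_abs, abs_of_nonneg h2]
    exact mul_le_mul_of_nonneg_left (h.b1b z hz) h2
  have h5 := norm_sub_le (H2 z - I * β * z + P z * b1 z) (P z * b1 z)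
  rw [add_sub_cancel_right] at h5
  have h6 : C * P z ^ 2 ≤ C * P z := mul_le_mul_of_nonneg_left (by nlinarith) h.hC
  linarith

lemma BData.H2bd {P g e : ℂ → ℝ} {a0 a1 a2 b1 H1 H1' H2 H2' : ℂ → ℂ} {β δ C : ℝ}
    (h : BData P g e a0 a1 a2 b1 H1 H1' H2 H2' β δ C) {z : ℂ} (hz : z ∈ ball (0:ℂ) δ) :
    ‖H2 z‖ ≤ 3 * C := by
  have h1 := h.H2c hz
  have h3 := h.P1 z hz
  have h4 : ‖I * β * z‖ ≤ C := by
    rw [norm_mul, norm_mul, Complex.norm_I, one_mul, Complex.norm_real, Real.norm_eq_abs]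
    have : ‖z‖ ≤ 1 := (mem_ball_zero_iff.mp hz).le.trans h.δ1
    calc |β| * ‖z‖ ≤ C * 1 := mul_le_mul h.βC this (norm_nonneg _) h.hC
      _ = C := mul_one _
  have h5 := norm_add_le (H2 z - I * β * z) (I * β * z)
  rw [sub_add_cancel] at h5
  have h6 : 2 * C * P z ≤ 2 * C := mul_le_of_le_one_right (by linarith [h.hC]) h3
  linarith

lemma BData.gam {P g e : ℂ → ℝ} {a0 a1 a2 b1 H1 H1' H2 H2' : ℂ → ℂ} {β δ C : ℝ}
    (h : BData P g e a0 a1 a2 b1 H1 H1' H2 H2' β δ C) {z : ℂ} (hz : z ∈ ball (0:ℂ) δ) :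
    ‖1 - I * (g z : ℂ)‖ ≤ 1 + C ∧ ‖I - (g z : ℂ)‖ ≤ 1 + C := by
  have h1 := h.gb z hz
  constructor
  · refine (norm_sub_le _ _).trans ?_
    rw [norm_mul, Complex.norm_I, one_mul, Complex.norm_real, Real.norm_eq_abs, norm_one]; linarith
  · refine (norm_sub_le _ _).trans ?_
    rw [Complex.norm_I, Complex.norm_real, Real.norm_eq_abs]; linarith

lemma re_mul_le {a b : ℂ} {x y : ℝ} (ha : ‖a‖ ≤ x) (hb : ‖b‖ ≤ y) : |(a * b).re| ≤ x * y := by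
  refine (Complex.abs_re_le_norm _).trans ?_
  rw [norm_mul]
  exact mul_le_mul ha hb (norm_nonneg _) ((norm_nonneg _).trans ha)

lemma clm_le {D : ℂ →L[ℝ] ℝ} {b : ℂ} {x y : ℝ} (ha : ‖D‖ ≤ x) (hb : ‖b‖ ≤ y) : |D b| ≤ x * y := by
  refine (D.le_opNorm b).trans ?_
  exact mul_le_mul ha hb (norm_nonneg _) ((norm_nonneg _).trans ha)

lemma BData.a0z {P g e : ℂ → ℝ} {a0 a1 a2 b1 H1 H1' H2 H2' : ℂ → ℂ} {β δ C : ℝ}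
    (h : BData P g e a0 a1 a2 b1 H1 H1' H2 H2' β δ C) : ∀ᶠ z in nhds 0, a0 z = 0 := by
  have h0 : (0:ℂ) ∈ ball (0:ℂ) δ := by simpa using h.hδ
  have hnh : ball (0:ℂ) δ ∈ nhds 0 := ball_mem_nhds 0 h.hδ
  have hg := (h.gan 0 h0).continuousAt
  refine a0_zero a0 (fun z => 1 - I * g z) (h.da0.analyticAt hnh) ?_ ?_ h.a00 ?_
  · exact continuousAt_const.sub (continuousAt_const.mul
      (Complex.continuous_ofReal.continuousAt.comp hg))
  · intro h1
    have := congrArg Complex.re h1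
    simp at this
  · have hC := h.hC
    refine FlatAt.of_le h.flat h.DPflat ((1 + C) * C + 3 * C) δ h.hδ fun z hz => ?_
    have h1 := h.T0 z hz
    have h2 : |((1 - I * g z) * (H1 z - a0 z)).re| ≤ (1 + C) * (C * P z) :=
      re_mul_le (h.gam hz).1 (h.H1a z hz)
    have h3 : |fderiv ℝ P z (H2 z)| ≤ ‖fderiv ℝ P z‖ * (3 * C) := clm_le le_rfl (h.H2bd hz)
    have h4 : ((1 - I * g z) * a0 z).re = -((1 - I * g z) * (H1 z - a0 z)).re
        - fderiv ℝ P z (H2 z) := by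
      rw [mul_sub, Complex.sub_re]; linarith
    rw [h4]
    rw [abs_le] at h2 h3
    have n1 := h.Pn z hz
    have n2 := norm_nonneg (fderiv ℝ P z)
    have m1 : 0 ≤ C * P z := mul_nonneg hC n1
    have m2 : 0 ≤ C * ‖fderiv ℝ P z‖ := mul_nonneg hC n2
    have m3 : 0 ≤ C * (C * ‖fderiv ℝ P z‖) := mul_nonneg hC m2
    rw [abs_le]
    constructor <;> nlinarith [h2.1, h2.2, h3.1, h3.2]

lemma analyticAt_clm_apply {D : ℂ → (ℂ →L[ℝ] ℝ)} {v : ℂ → ℂ} {z : ℂ} (hD : AnalyticAt ℝ D z)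
    (hv : AnalyticAt ℝ v z) : AnalyticAt ℝ (fun z => D z (v z)) z :=
  AnalyticAt.fun_comp (f := fun z => (D z, v z))
    ((ContinuousLinearMap.id ℝ (ℂ →L[ℝ] ℝ)).analyticAt_bilinear (D z, v z)) (AnalyticAt.prod hD hv)

lemma T1_expand (e g : ℝ) (x y : ℂ) :
    (-I * e * x + (1 - I * g) * ((I - g) * y)).re = e * x.im - (1 + g ^ 2) * y.im := by
  simp only [add_re, mul_re, sub_re, neg_re, I_re, I_im, ofReal_re, ofReal_im, one_re, neg_im,
    mul_im, sub_im, one_im]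
  ring

lemma BData.eqA {P g e : ℂ → ℝ} {a0 a1 a2 b1 H1 H1' H2 H2' : ℂ → ℂ} {β δ C : ℝ}
    (h : BData P g e a0 a1 a2 b1 H1 H1' H2 H2' β δ C) (ha0 : ∀ z ∈ ball (0:ℂ) δ, a0 z = 0) :
    ∀ z ∈ ball (0:ℂ) δ, -(1 + g z ^ 2) * (a1 z).im + fderiv ℝ g z (I * β * z) = 0 := by
  have hC := h.hC
  refine flat_analytic _ δ ?_ ?_
  · intro z hz
    have hg := h.gan z hz
    have ha : AnalyticAt ℝ a1 z :=
      (h.da1.analyticAt (isOpen_ball.mem_nhds hz)).restrictScalars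
    have him : AnalyticAt ℝ (fun z => (a1 z).im) z := (Complex.imCLM.analyticAt _).comp ha
    have h1 : AnalyticAt ℝ (fun z => fderiv ℝ g z (I * β * z)) z :=
      analyticAt_clm_apply hg.fderiv (analyticAt_const.mul analyticAt_id)
    exact ((analyticAt_const.add (hg.pow 2)).neg.mul him).add h1
  · refine FlatAt.of_le h.flat h.DPflat ((1 + C ^ 2) * C + C * C + (1 + C) * (2 * C) + C * (2 * C))
      δ h.hδ fun z hz => ?_
    have h1 := h.T1 z hz
    rw [T1_expand] at h1
    have n1 := h.Pn z hz
    have n2 := norm_nonneg (fderiv ℝ P z)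
    have b1' : |(1 + g z ^ 2) * (H1' z - a1 z).im| ≤ (1 + C ^ 2) * (C * P z) := by
      rw [abs_mul]
      have : |1 + g z ^ 2| ≤ 1 + C ^ 2 := by
        rw [abs_of_nonneg (by positivity), ← sq_abs]
        have := h.gb z hz
        have := abs_nonneg (g z)
        nlinarith
      exact mul_le_mul this ((Complex.abs_im_le_norm _).trans (h.H1'a z hz)) (abs_nonneg _)
        (by positivity)
    have b2 : |e z * (H1 z).im| ≤ C * (C * P z) := by
      rw [abs_mul]
      have := h.H1a z hz
      rw [ha0 z hz, sub_zero] at this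
      exact mul_le_mul (h.eb z hz) ((Complex.abs_im_le_norm _).trans this) (abs_nonneg _) hC
    have hH2' : ‖H2' z‖ ≤ 2 * C := by
      have k1 := h.H2'a z hz
      have k2 := norm_add_le (H2' z - b1 z) (b1 z)
      rw [sub_add_cancel] at k2
      have k3 := h.b1b z hz
      have k4 : C * P z ≤ C := mul_le_of_le_one_right hC (h.P1 z hz)
      linarith
    have b3 : |fderiv ℝ P z ((I - g z) * H2' z)| ≤ ‖fderiv ℝ P z‖ * ((1 + C) * (2 * C)) := by
      refine clm_le le_rfl ?_
      rw [norm_mul]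
      exact mul_le_mul (h.gam hz).2 hH2' (norm_nonneg _) (by linarith)
    have b4 : |fderiv ℝ g z (H2 z - I * β * z)| ≤ C * (2 * C * P z) :=
      clm_le (h.Dgb z hz) (h.H2c hz)
    have key : -(1 + g z ^ 2) * (a1 z).im + fderiv ℝ g z (I * β * z)
      = (1 + g z ^ 2) * (H1' z - a1 z).im - e z * (H1 z).im - fderiv ℝ P z ((I - g z) * H2' z)
        - fderiv ℝ g z (H2 z - I * β * z) := by
      rw [map_sub, Complex.sub_im]; linarith
    rw [key]
    have m1 : 0 ≤ ((1 + C ^ 2) * C + C * C + C * (2 * C)) * ‖fderiv ℝ P z‖ := by positivity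
    have m2 : 0 ≤ ((1 + C) * (2 * C)) * P z := by positivity
    rw [abs_le] at b1' b2 b3 b4 ⊢
    constructor <;> linarith [b1'.1, b1'.2, b2.1, b2.2, b3.1, b3.2, b4.1, b4.2]

lemma BData.ang {P g e : ℂ → ℝ} {a0 a1 a2 b1 H1 H1' H2 H2' : ℂ → ℂ} {β δ C : ℝ}
    (h : BData P g e a0 a1 a2 b1 H1 H1' H2 H2' β δ C) (ha0 : ∀ z ∈ ball (0:ℂ) δ, a0 z = 0) :
    ∃ K, 0 ≤ K ∧ ∀ z ∈ ball (0:ℂ) δ, |fderiv ℝ P z (I * z)| ≤ K * P z := by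
  have hC := h.hC
  have hβ := abs_pos.mpr h.hβ
  refine ⟨((1 + C) * C + C * (2 * C)) / |β|, by positivity, fun z hz => ?_⟩
  have n1 := h.Pn z hz
  have h1 := h.T0 z hz
  have h2 := h.H1a z hz
  rw [ha0 z hz, sub_zero] at h2
  have b1 := re_mul_le (h.gam hz).1 h2
  have b2 := clm_le (h.DPb z hz) (h.H2c hz)
  have e1 : fderiv ℝ P z (I * β * z) = β * fderiv ℝ P z (I * z) := by
    rw [show I * β * z = β • (I * z) by rw [Complex.real_smul]; ring, map_smul, smul_eq_mul]
  rw [map_sub, e1] at b2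
  have : |β| * |fderiv ℝ P z (I * z)| ≤ ((1 + C) * C + C * (2 * C)) * P z := by
    rw [← abs_mul]
    rw [abs_le] at b1 b2 ⊢
    constructor <;> linarith [b1.1, b1.2, b2.1, b2.2]
  rw [div_mul_eq_mul_div, le_div_iff₀ hβ]
  linarith

lemma BData.radial {P g e : ℂ → ℝ} {a0 a1 a2 b1 H1 H1' H2 H2' : ℂ → ℂ} {β δ C : ℝ}
    (h : BData P g e a0 a1 a2 b1 H1 H1' H2 H2' β δ C) (ha0 : ∀ z ∈ ball (0:ℂ) δ, a0 z = 0) :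
    ∃ A : ℂ → ℝ, AnalyticAt ℝ A 0 ∧ ∃ K, 0 ≤ K ∧ ∀ z ∈ ball (0:ℂ) δ,
      |fderiv ℝ P z ((I - g z) * b1 z) + P z * A z| ≤ K * P z * (P z + ‖fderiv ℝ P z‖) := by
  have hC := h.hC
  have h0 : (0:ℂ) ∈ ball (0:ℂ) δ := by simpa using h.hδ
  have hnh : ball (0:ℂ) δ ∈ nhds 0 := ball_mem_nhds 0 h.hδ
  refine ⟨fun z => -(e z) * (a1 z).im + (1 + g z ^ 2) * (a2 z).im - fderiv ℝ g z (b1 z), ?_,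
    (C * C + (1 + C ^ 2) * C + (1 + C) * C + C * C), by positivity, fun z hz => ?_⟩
  · have hg := h.gan 0 h0
    have he := h.ean 0 h0
    have ha1 : AnalyticAt ℝ a1 0 := (h.da1.analyticAt hnh).restrictScalars
    have ha2 : AnalyticAt ℝ a2 0 := (h.da2.analyticAt hnh).restrictScalars
    have hb1 : AnalyticAt ℝ b1 0 := (h.db1.analyticAt hnh).restrictScalars
    have i1 : AnalyticAt ℝ (fun z => (a1 z).im) 0 := (Complex.imCLM.analyticAt _).comp ha1
    have i2 : AnalyticAt ℝ (fun z => (a2 z).im) 0 := (Complex.imCLM.analyticAt _).comp ha2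
    exact ((he.neg.mul i1).add ((analyticAt_const.add (hg.pow 2)).mul i2)).sub
      (analyticAt_clm_apply hg.fderiv hb1)
  · have h1 := h.T1 z hz
    rw [T1_expand] at h1
    have hA := h.eqA ha0 z hz
    have n1 := h.Pn z hz
    have n2 := norm_nonneg (fderiv ℝ P z)
    have b1' : |e z * (H1 z + P z * a1 z).im| ≤ C * (C * P z ^ 2) := by
      rw [abs_mul]
      have := h.H1b z hz
      rw [ha0 z hz, sub_zero] at this
      exact mul_le_mul (h.eb z hz) ((Complex.abs_im_le_norm _).trans this) (abs_nonneg _) hC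
    have b2 : |(1 + g z ^ 2) * (H1' z - a1 z + P z * a2 z).im| ≤ (1 + C ^ 2) * (C * P z ^ 2) := by
      rw [abs_mul]
      have : |1 + g z ^ 2| ≤ 1 + C ^ 2 := by
        rw [abs_of_nonneg (by positivity), ← sq_abs]
        have := h.gb z hz
        have := abs_nonneg (g z)
        nlinarith
      exact mul_le_mul this ((Complex.abs_im_le_norm _).trans (h.H1'b z hz)) (abs_nonneg _)
        (by positivity)
    have b3 : |fderiv ℝ P z ((I - g z) * (H2' z - b1 z))|
        ≤ ‖fderiv ℝ P z‖ * ((1 + C) * (C * P z)) := by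
      refine clm_le le_rfl ?_
      rw [norm_mul]
      exact mul_le_mul (h.gam hz).2 (h.H2'a z hz) (norm_nonneg _) (by linarith)
    have b4 : |fderiv ℝ g z (H2 z - I * β * z + P z * b1 z)| ≤ C * (C * P z ^ 2) :=
      clm_le (h.Dgb z hz) (h.H2b z hz)
    have e1 : fderiv ℝ g z (P z * b1 z) = P z * fderiv ℝ g z (b1 z) := by
      rw [show (P z : ℂ) * b1 z = P z • b1 z by rw [Complex.real_smul], map_smul, smul_eq_mul]
    rw [map_add, map_sub, e1] at b4
    rw [mul_sub, map_sub] at b3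
    rw [Complex.add_im, Complex.im_ofReal_mul] at b1' b2
    rw [Complex.sub_im] at b2
    have m1 : 0 ≤ (C * C + (1 + C ^ 2) * C + C * C) * (P z * ‖fderiv ℝ P z‖) := by positivity
    have m2 : 0 ≤ ((1 + C) * C) * P z ^ 2 := by positivity
    rw [abs_le] at b1' b2 b3 b4 ⊢
    constructor <;> linarith [b1'.1, b1'.2, b2.1, b2.2, b3.1, b3.2, b4.1, b4.2]

lemma BData.T0c {P g e : ℂ → ℝ} {a0 a1 a2 b1 H1 H1' H2 H2' : ℂ → ℂ} {β δ C : ℝ}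
    (h : BData P g e a0 a1 a2 b1 H1 H1' H2 H2' β δ C) (ha0 : ∀ z ∈ ball (0:ℂ) δ, a0 z = 0) :
    ∀ z ∈ ball (0:ℂ) δ,
    |β * fderiv ℝ P z (I * z) - P z * ((a1 z).re + g z * (a1 z).im) - P z * fderiv ℝ P z (b1 z)|
      ≤ ((1 + C) * C + C * C) * P z ^ 2 := by
  intro z hz
  have h1 := h.T0 z hz
  have h2 := h.H1b z hz
  rw [ha0 z hz, sub_zero] at h2
  have c1 := re_mul_le (h.gam hz).1 h2
  have c2 := clm_le (h.DPb z hz) (h.H2b z hz)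
  have e1 : fderiv ℝ P z (I * β * z) = β * fderiv ℝ P z (I * z) := by
    rw [show I * β * z = β • (I * z) by rw [Complex.real_smul]; ring, map_smul, smul_eq_mul]
  have e2 : fderiv ℝ P z (P z * b1 z) = P z * fderiv ℝ P z (b1 z) := by
    rw [show (P z : ℂ) * b1 z = P z • b1 z by rw [Complex.real_smul], map_smul, smul_eq_mul]
  have e3 : ((1 - I * g z) * (H1 z + P z * a1 z)).re = ((1 - I * g z) * H1 z).re
      + P z * ((a1 z).re + g z * (a1 z).im) := by
    simp only [add_re, mul_re, sub_re, I_re, I_im, ofReal_re, ofReal_im, one_re,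
      mul_im, sub_im, one_im, add_im]
    ring
  rw [map_add, map_sub, e1, e2] at c2
  rw [e3] at c1
  rw [abs_le] at c1 c2 ⊢
  constructor <;> linarith [c1.1, c1.2, c2.1, c2.2]

lemma crit_circle (P : ℂ → ℝ) (r : ℝ) (hr : 0 < r) (hP : ∀ z, ‖z‖ = r → DifferentiableAt ℝ P z) :
    ∃ z, ‖z‖ = r ∧ fderiv ℝ P z (I * z) = 0 := by
  obtain ⟨z0, hz0, hmax⟩ := (isCompact_sphere (0:ℂ) r).exists_isMaxOn
    ⟨(r:ℂ), by simp [abs_of_pos hr]⟩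
    (fun z hz => (hP z (by simpa using hz)).continuousAt.continuousWithinAt)
  have hz : ‖z0‖ = r := by simpa using hz0
  refine ⟨z0, hz, ?_⟩
  have hc : HasDerivAt (fun θ : ℝ => Complex.exp (θ * I) * z0) (I * z0) 0 := by
    have : HasDerivAt (fun θ : ℝ => Complex.exp (θ * I) * z0)
      (Complex.exp (((0:ℝ):ℂ) * I) * (1 * I) * z0) 0 :=
      (((Complex.ofRealCLM.hasDerivAt (x := (0:ℝ))).mul_const I).cexp).mul_const z0
    simpa using this
  have hcomp : HasDerivAt (fun θ : ℝ => P (Complex.exp (θ * I) * z0)) _ 0 :=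
    HasFDerivAt.comp_hasDerivAt_of_eq 0 (hP z0 hz).hasFDerivAt hc (by simp)
  have hm : IsLocalMax (fun θ : ℝ => P (Complex.exp (θ * I) * z0)) 0 := by
    refine Eventually.of_forall fun θ => ?_
    have := hmax (show Complex.exp (θ * I) * z0 ∈ sphere (0:ℂ) r by
      rw [mem_sphere_zero_iff_norm, norm_mul, Complex.norm_exp_ofReal_mul_I, one_mul, hz])
    simpa using this
  exact hm.hasDerivAt_eq_zero hcomp

lemma FlatAt.zero {F : ℂ → ℝ} (h : FlatAt F) : F 0 = 0 := by
  have := (h 1).eq_zero_imp.self_of_nhds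
  exact this (by simp)

lemma BData.a1_zero {P g e : ℂ → ℝ} {a0 a1 a2 b1 H1 H1' H2 H2' : ℂ → ℂ} {β δ C : ℝ}
    (h : BData P g e a0 a1 a2 b1 H1 H1' H2 H2' β δ C) (ha0 : ∀ z ∈ ball (0:ℂ) δ, a0 z = 0) :
    a1 0 = 0 := by
  have hC := h.hC
  have h0 : (0:ℂ) ∈ ball (0:ℂ) δ := by simpa using h.hδ
  have hnh : ball (0:ℂ) δ ∈ nhds 0 := ball_mem_nhds 0 h.hδ
  have him : (a1 0).im = 0 := by
    have := h.eqA ha0 0 h0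
    rw [mul_zero, map_zero, add_zero] at this
    rcases mul_eq_zero.mp this with h | h
    · nlinarith [sq_nonneg (g 0)]
    · exact h
  have hre : (a1 0).re = 0 := by
    by_contra hne
    set K := (1 + C) * C + C * C + C with hK
    set ψ : ℂ → ℝ := fun z => (a1 z).re + g z * (a1 z).im with hψ
    have ca : ContinuousAt a1 0 := h.da1.continuousOn.continuousAt hnh
    have cg := (h.gan 0 h0).continuousAt
    have cψ : ContinuousAt ψ 0 := (Complex.continuous_re.continuousAt.comp ca).add
      (cg.mul (Complex.continuous_im.continuousAt.comp ca))
    have cP := (h.smooth 0 h0).continuousAt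
    have cD := ((h.smooth 0 h0).fderiv_right (m := 1) (by norm_num)).continuousAt.norm
    have cT : ContinuousAt (fun z => |ψ z| - K * (P z + ‖fderiv ℝ P z‖)) 0 :=
      cψ.abs.sub (continuousAt_const.mul (cP.add cD))
    have hT0 : 0 < (fun z => |ψ z| - K * (P z + ‖fderiv ℝ P z‖)) 0 := by
      have := h.DPflat.zero
      simp only [this, h.P0, hψ, him]
      simpa using hne
    have hev := cT.tendsto.eventually_const_lt hT0
    obtain ⟨ρ, hρ, hb⟩ := Metric.eventually_nhds_iff_ball.mp hev
    set r := min ρ δ / 2 with hr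
    have hmpos : 0 < min ρ δ := lt_min hρ h.hδ
    have hrpos : 0 < r := by positivity
    have hr1 : r < ρ := by have := min_le_left ρ δ; linarith
    have hr2 : r < δ := by have := min_le_right ρ δ; linarith
    obtain ⟨z, hz, hcr⟩ := crit_circle P r hrpos (fun z hz =>
      (h.smooth z (by rw [mem_ball_zero_iff, hz]; exact hr2)).differentiableAt (by norm_num))
    have hzδ : z ∈ ball (0:ℂ) δ := by rw [mem_ball_zero_iff, hz]; exact hr2
    have hz0 : z ≠ 0 := by rw [← norm_pos_iff, hz]; exact hrpos
    have hPp := h.pos z hzδ hz0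
    have h1 := h.T0c ha0 z hzδ
    have h2 := hb z (by rw [mem_ball_zero_iff, hz]; exact hr1)
    have h3 : |fderiv ℝ P z (b1 z)| ≤ ‖fderiv ℝ P z‖ * C := clm_le le_rfl (h.b1b z hzδ)
    rw [hcr, mul_zero] at h1
    have h4 : |P z| * |ψ z + fderiv ℝ P z (b1 z)| ≤ P z * (((1 + C) * C + C * C) * P z) := by
      rw [← abs_mul, ← abs_neg]
      calc _ = |0 - P z * ((a1 z).re + g z * (a1 z).im) - P z * fderiv ℝ P z (b1 z)| := by
            congr 1; simp only [hψ]; ring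
        _ ≤ _ := h1
        _ = _ := by ring
    rw [abs_of_pos hPp] at h4
    have h5 := le_of_mul_le_mul_left h4 hPp
    have h6 : |ψ z| ≤ |ψ z + fderiv ℝ P z (b1 z)| + |fderiv ℝ P z (b1 z)| := by
      have := abs_sub (ψ z + fderiv ℝ P z (b1 z)) (fderiv ℝ P z (b1 z))
      rwa [add_sub_cancel_right] at this
    have m1 : 0 ≤ C * P z := by positivity
    have m2 : 0 ≤ ((1 + C) * C + C * C) * ‖fderiv ℝ P z‖ := by positivity
    have : K * (P z + ‖fderiv ℝ P z‖) = ((1 + C) * C + C * C) * P z + C * P z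
      + ((1 + C) * C + C * C) * ‖fderiv ℝ P z‖ + ‖fderiv ℝ P z‖ * C := by rw [hK]; ring
    linarith
  exact Complex.ext hre him

lemma BData.case_re {P g e : ℂ → ℝ} {a0 a1 a2 b1 H1 H1' H2 H2' : ℂ → ℂ} {β δ C : ℝ}
    (h : BData P g e a0 a1 a2 b1 H1 H1' H2 H2' β δ C) (ha0 : ∀ z ∈ ball (0:ℂ) δ, a0 z = 0)
    (bh : ℂ → ℂ) (c M : ℝ) (hc : 0 < c) (hM : 0 ≤ M)
    (hb : ∀ z ∈ ball (0:ℂ) δ, b1 z = bh z * z ∧ c ≤ |(bh z).re| ∧ |(bh z).im| ≤ M) : False := by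
  have hC := h.hC
  have h0 : (0:ℂ) ∈ ball (0:ℂ) δ := by simpa using h.hδ
  have hnh : ball (0:ℂ) δ ∈ nhds 0 := ball_mem_nhds 0 h.hδ
  have hβ := h.hβ
  have hβ' : (β:ℂ) ≠ 0 := by exact_mod_cast hβ
  have ha1 := h.a1_zero ha0
  have hd : DifferentiableOn ℂ (fun z => dslope a1 0 z / (I * β)) (ball 0 δ) :=
    ((Complex.differentiableOn_dslope hnh).mpr h.da1).div_const _
  obtain ⟨E, hE⟩ := hd.isExactOn_ball
  have hzE : ∀ z, z * (dslope a1 0 z / (I * β)) = a1 z / (I * β) := by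
    intro z
    have := sub_smul_dslope a1 0 z
    rw [ha1, sub_zero, sub_zero, smul_eq_mul] at this
    rw [← this]; ring
  obtain ⟨K, hK0, hK⟩ := h.ang ha0
  set q : ℂ → ℝ := fun z => 1/2 * Real.log (1 + g z ^ 2) + (E z).re with hq
  have hqd : ∀ z ∈ ball (0:ℂ) δ, HasFDerivAt q
      ((1/2 : ℝ) • ((1 + g z ^ 2)⁻¹ • ((2 * g z) • fderiv ℝ g z)) + Complex.reCLM.comp
        ((ContinuousLinearMap.toSpanSingleton ℂ (dslope a1 0 z / (I * β))).restrictScalars ℝ)) z := by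
    intro z hz
    have hg := (h.gan z hz).differentiableAt.hasFDerivAt
    have h1 : HasFDerivAt (fun z => 1 + g z ^ 2) ((2 * g z) • fderiv ℝ g z) z := by
      have := (hg.pow 2).const_add 1
      simpa using this
    have h2 := h1.log (by positivity)
    have h3 : HasFDerivAt (fun z => (E z).re) _ z :=
      Complex.reCLM.hasFDerivAt.comp z ((hE z hz).hasFDerivAt.restrictScalars ℝ)
    exact (h2.const_mul (1/2)).add h3
  have hDq : ∀ z ∈ ball (0:ℂ) δ, ∀ v, fderiv ℝ q z v = (1 + g z ^ 2)⁻¹ * (g z * fderiv ℝ g z v)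
      + (v * (dslope a1 0 z / (I * β))).re := by
    intro z hz v
    rw [(hqd z hz).fderiv]
    simp [ContinuousLinearMap.toSpanSingleton_apply]
    ring
  set K2 := (1 + C) * C + C * C with hK2
  set C' := max (C * C + C / |β|) ((K2 + M * K) / c) with hC'
  refine max_lemma δ C' h.hδ P q h.P0 h.pos h.flat
    (fun z hz => (h.smooth z hz).differentiableAt (by norm_num))
    (fun z hz => (hqd z hz).differentiableAt) ?_ ?_
  · intro z hz
    rw [hDq z hz, hzE]
    refine le_trans ?_ (le_max_left _ _)
    refine (abs_add_le _ _).trans (add_le_add ?_ ?_)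
    · rw [abs_mul, abs_mul]
      have k1 : |(1 + g z ^ 2)⁻¹| ≤ 1 := by
        rw [abs_of_pos (by positivity)]
        exact inv_le_one_of_one_le₀ (by nlinarith [sq_nonneg (g z)])
      have k2 : |fderiv ℝ g z z| ≤ C * 1 :=
        clm_le (h.Dgb z hz) ((mem_ball_zero_iff.mp hz).le.trans h.δ1)
      have k3 := h.gb z hz
      calc _ ≤ 1 * (C * (C * 1)) := by gcongr
        _ = C * C := by ring
    · refine (Complex.abs_re_le_norm _).trans ?_
      rw [norm_div, norm_mul, Complex.norm_I, one_mul, Complex.norm_real, Real.norm_eq_abs]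
      gcongr
      exact h.a1b z hz
  · intro z hz hz0 hcr
    have hPp := h.pos z hz hz0
    have hA := h.eqA ha0 z hz
    have e1 : fderiv ℝ g z (I * β * z) = β * fderiv ℝ g z (I * z) := by
      rw [show I * β * z = β • (I * z) by rw [Complex.real_smul]; ring, map_smul, smul_eq_mul]
    rw [e1] at hA
    have e2 : fderiv ℝ g z (I * z) = (1 + g z ^ 2) * (a1 z).im / β := by
      field_simp; linarith
    have e3 : (I * z * (dslope a1 0 z / (I * β))).re = (a1 z).re / β := by
      rw [mul_assoc, hzE]
      rw [show I * (a1 z / (I * β)) = a1 z / (β : ℂ) by field_simp, Complex.div_ofReal_re]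
    rw [hDq z hz, e2, e3] at hcr
    have hcr' : β * fderiv ℝ P z (I * z) = P z * ((a1 z).re + g z * (a1 z).im) := by
      rw [hcr]
      have : (1 + g z ^ 2) ≠ 0 := by positivity
      field_simp
      ring
    have h1 := h.T0c ha0 z hz
    rw [hcr', sub_self, zero_sub, abs_neg, abs_mul, abs_of_pos hPp] at h1
    have h2 : P z * |fderiv ℝ P z (b1 z)| ≤ P z * (K2 * P z) := by
      refine h1.trans_eq ?_; ring
    have h3 := le_of_mul_le_mul_left h2 hPp
    obtain ⟨hb1, hb2, hb3⟩ := hb z hz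
    rw [hb1, clm_complex] at h3
    have h4 := hK z hz
    have h5 : |(bh z).im * fderiv ℝ P z (I * z)| ≤ M * (K * P z) := by
      rw [abs_mul]; gcongr
    have h6 : |(bh z).re| * |fderiv ℝ P z z| ≤ (K2 + M * K) * P z := by
      rw [← abs_mul]
      rw [abs_le] at h3 h5 ⊢
      constructor <;> linarith [h3.1, h3.2, h5.1, h5.2]
    have h7 : c * |fderiv ℝ P z z| ≤ (K2 + M * K) * P z :=
      (mul_le_mul_of_nonneg_right hb2 (abs_nonneg _)).trans h6
    calc fderiv ℝ P z z ≤ |fderiv ℝ P z z| := le_abs_self _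
      _ ≤ (K2 + M * K) / c * P z := by
        rw [div_mul_eq_mul_div, le_div_iff₀ hc]; linarith
      _ ≤ C' * P z := mul_le_mul_of_nonneg_right (le_max_right _ _) hPp.le

lemma BData.case_ray {P g e : ℂ → ℝ} {a0 a1 a2 b1 H1 H1' H2 H2' : ℂ → ℂ} {β δ C : ℝ}
    (h : BData P g e a0 a1 a2 b1 H1 H1' H2 H2' β δ C) (ha0 : ∀ z ∈ ball (0:ℂ) δ, a0 z = 0)
    (k : ℕ) (bh : ℂ → ℂ) (hbh : AnalyticAt ℂ bh 0) (hb : ∀ᶠ z in nhds 0, b1 z = z ^ k * bh z)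
    (J : Finset ℕ) (hJ : J.Nonempty) (η : ℕ → ℂ) (ε : ℕ → ℝ) (τ : ℂ)
    (hη : ∀ j ∈ J, ‖η j‖ = 1) (hε : ∀ j ∈ J, ε j ^ 2 = 1)
    (hητ : ∀ j ∈ J, η j ^ ((k:ℤ) - 1) = ε j * τ)
    (hτ : 0 < (τ * ((I - g 0) * bh 0)).re)
    (hA : ∀ A : ℂ → ℝ, AnalyticAt ℝ A 0 → ∃ C δ : ℝ, 0 ≤ C ∧ 0 < δ ∧ ∀ r ∈ Ioo 0 δ,
      |∑ j ∈ J, ε j * A (r * η j)| ≤ C * r ^ ((k:ℤ) - 1)) : False := by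
  have hC := h.hC
  have h0 : (0:ℂ) ∈ ball (0:ℂ) δ := by simpa using h.hδ
  obtain ⟨A, hAan, K, hK0, hK⟩ := h.radial ha0
  obtain ⟨CA, δA, hCA, hδA, hA'⟩ := hA A hAan
  obtain ⟨Kθ, hKθ0, hKθ⟩ := h.ang ha0
  obtain ⟨ρ1, hρ1, hf1⟩ := h.flat.le_pow k
  obtain ⟨ρ2, hρ2, hf2⟩ := h.DPflat.le_pow k
  obtain ⟨ρ3, hρ3, hf3⟩ := Metric.eventually_nhds_iff_ball.mp hb
  set δ' := min (min δ δA) (min ρ1 (min ρ2 ρ3)) with hδ'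
  have l1 : δ' ≤ δ := (min_le_left _ _).trans (min_le_left _ _)
  have l2 : δ' ≤ δA := (min_le_left _ _).trans (min_le_right _ _)
  have l3 : δ' ≤ ρ1 := (min_le_right _ _).trans (min_le_left _ _)
  have l4 : δ' ≤ ρ2 := (min_le_right _ _).trans ((min_le_right _ _).trans (min_le_left _ _))
  have l5 : δ' ≤ ρ3 := (min_le_right _ _).trans ((min_le_right _ _).trans (min_le_right _ _))
  have hδ'pos : 0 < δ' := lt_min (lt_min h.hδ hδA) (lt_min hρ1 (lt_min hρ2 hρ3))
  have s1 := ball_subset_ball (x := (0:ℂ)) l1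
  have s3 := ball_subset_ball (x := (0:ℂ)) l3
  have s4 := ball_subset_ball (x := (0:ℂ)) l4
  have s5 := ball_subset_ball (x := (0:ℂ)) l5
  set C' := 2 * K + Kθ + CA with hC'
  have hC'0 : 0 ≤ C' := by positivity
  refine rays_lemma J hJ δ' C' hδ'pos hC'0 P A (fun z => (I - g z) * bh z) ((k:ℤ) - 1) η ε τ
    (fun z hz => h.pos z (s1 hz)) h.flat
    (fun z hz => (h.smooth z (s1 hz)).differentiableAt (by norm_num)) ?_ hη hε hητ hτ ?_ ?_ ?_
  · have hg : AnalyticAt ℝ (fun z => (g z : ℂ)) 0 :=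
      (Complex.ofRealCLM.analyticAt _).comp (h.gan 0 h0)
    exact ((analyticAt_const.sub hg).mul hbh.restrictScalars).contDiffAt
  · intro z hz hz0
    have hzn : 0 < ‖z‖ := norm_pos_iff.mpr hz0
    have hPp := h.pos z (s1 hz) hz0
    have h1 := hK z (s1 hz)
    have e1 : z ^ ((k:ℤ) - 1) * ((I - g z) * bh z) * z = (I - g z) * b1 z := by
      rw [hf3 z (s5 hz), zpow_sub_one₀ hz0, zpow_natCast]
      field_simp
    rw [e1]
    refine h1.trans ?_
    have hz1 : ‖z‖ ≤ 1 := (mem_ball_zero_iff.mp (s1 hz)).le.trans h.δ1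
    have h2 := (le_abs_self _).trans (hf1 z (s3 hz))
    have h3 := (le_abs_self _).trans (hf2 z (s4 hz))
    have h4 : ‖z‖ ^ k ≤ ‖z‖ ^ ((k:ℤ) - 1) := by
      rw [← zpow_natCast]
      exact zpow_le_zpow_right_of_le_one₀ hzn hz1 (by omega)
    have h5 : P z + ‖fderiv ℝ P z‖ ≤ 2 * ‖z‖ ^ ((k:ℤ) - 1) := by linarith
    have hzp : 0 < ‖z‖ ^ ((k:ℤ) - 1) := zpow_pos hzn _
    calc K * P z * (P z + ‖fderiv ℝ P z‖) ≤ K * P z * (2 * ‖z‖ ^ ((k:ℤ) - 1)) := by gcongr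
      _ = (2 * K) * P z * ‖z‖ ^ ((k:ℤ) - 1) := by ring
      _ ≤ C' * P z * ‖z‖ ^ ((k:ℤ) - 1) := by gcongr; linarith
  · intro z hz hz0
    have hPp := h.pos z (s1 hz) hz0
    refine (hKθ z (s1 hz)).trans ?_
    gcongr; linarith
  · intro r hr
    refine (hA' r ⟨hr.1, hr.2.trans_le l2⟩).trans ?_
    have := zpow_pos hr.1 ((k:ℤ) - 1)
    gcongr; linarith

lemma single_bound (k : ℤ) (hk : k ≤ 0) (s : ℝ) (hs : |s| = 1) (η : ℂ)
    (A : ℂ → ℝ) (hA : AnalyticAt ℝ A 0) : ∃ C δ : ℝ, 0 ≤ C ∧ 0 < δ ∧ ∀ r ∈ Ioo 0 δ,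
      |∑ _j ∈ ({0} : Finset ℕ), s * A (r * η)| ≤ C * r ^ k := by
  have hc : ContinuousAt (fun r : ℝ => A (r * η)) 0 := by
    have : ContinuousAt (fun r : ℝ => (r:ℂ) * η) 0 := by fun_prop
    refine ContinuousAt.comp (g := A) ?_ this
    simpa using hA.continuousAt
  have hev := hc.abs.tendsto.eventually_lt_const (lt_add_one _)
  obtain ⟨ρ, hρ, hb⟩ := Metric.eventually_nhds_iff_ball.mp hev
  refine ⟨|A ((0:ℝ) * η)| + 1, min ρ 1, by positivity, lt_min hρ one_pos, fun r hr => ?_⟩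
  rw [Finset.sum_singleton, abs_mul, hs, one_mul]
  have h1 := hb r (by
    rw [mem_ball_zero_iff, Real.norm_eq_abs, abs_of_pos hr.1]; exact hr.2.trans_le (min_le_left _ _))
  have h2 : 1 ≤ r ^ k := one_le_zpow_of_nonpos₀ hr.1 (hr.2.trans_le (min_le_right _ _)).le hk
  have h3 : 0 ≤ |A ((0:ℝ) * η)| + 1 := by positivity
  nlinarith

theorem BData.main {P g e : ℂ → ℝ} {a0 a1 a2 b1 H1 H1' H2 H2' : ℂ → ℂ} {β δ C : ℝ}
    (h : BData P g e a0 a1 a2 b1 H1 H1' H2 H2' β δ C) (ha0 : ∀ z ∈ ball (0:ℂ) δ, a0 z = 0) :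
    ∀ᶠ z in nhds 0, b1 z = 0 := by
  have h0 : (0:ℂ) ∈ ball (0:ℂ) δ := by simpa using h.hδ
  have hnh : ball (0:ℂ) δ ∈ nhds 0 := ball_mem_nhds 0 h.hδ
  have hban : AnalyticAt ℂ b1 0 := h.db1.analyticAt hnh
  by_contra hnz
  obtain ⟨k, bh, hbh, hbh0, hb⟩ := hban.exists_eventuallyEq_pow_smul_nonzero_iff.mpr hnz
  simp only [sub_zero, smul_eq_mul] at hb
  set Γ := (I - g 0) * bh 0 with hΓ
  have hIg : (I - (g 0 : ℂ)) ≠ 0 := by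
    intro h1
    have := congrArg Complex.im h1
    simp at this
  have hΓ0 : Γ ≠ 0 := mul_ne_zero hIg hbh0
  have hΓn : (‖Γ‖ : ℂ) ≠ 0 := by exact_mod_cast norm_ne_zero_iff.mpr hΓ0
  have hΓpos : 0 < ‖Γ‖ := norm_pos_iff.mpr hΓ0
  match k, hb with
  | 0, hb =>
    refine h.case_ray ha0 0 bh hbh hb {0} (by simp) (fun _ => Γ / ‖Γ‖) (fun _ => 1) ((Γ / ‖Γ‖)⁻¹)
      ?_ (by simp) ?_ ?_ ?_
    · intro j _
      rw [norm_div, Complex.norm_real, norm_norm, div_self hΓpos.ne']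
    · intro j _
      simp
    · rw [← hΓ, inv_div, div_mul_cancel₀ _ hΓ0]; simpa using hΓpos
    · intro A hA
      exact single_bound _ (by norm_num) 1 (by simp) _ A hA
  | 1, hb =>
    by_cases hre : (bh 0).re = 0
    · have him : (bh 0).im ≠ 0 := fun h1 => hbh0 (Complex.ext hre h1)
      have hΓre : Γ.re ≠ 0 := by
        rw [hΓ]; simp [hre, him]
      set s : ℝ := Γ.re / |Γ.re| with hs
      have hsabs : |s| = 1 := by
        rw [hs, abs_div, abs_abs, div_self (abs_ne_zero.mpr hΓre)]
      have hss : s ^ 2 = 1 := by rw [← sq_abs, hsabs, one_pow]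
      refine h.case_ray ha0 1 bh hbh hb {0} (by simp) (fun _ => 1) (fun _ => s) (s : ℂ)
        (by simp) (fun _ _ => hss) ?_ ?_ ?_
      · intro j _
        simp only [Nat.cast_one, sub_self, zpow_zero]
        rw [← Complex.ofReal_mul, ← sq, hss, Complex.ofReal_one]
      · rw [← hΓ, Complex.re_ofReal_mul, hs]
        have : 0 < |Γ.re| := abs_pos.mpr hΓre
        rw [div_mul_eq_mul_div]
        exact div_pos (mul_self_pos.mpr hΓre) this
      · intro A hA
        exact single_bound _ (by norm_num) s hsabs _ A hA
    · have cb := hbh.continuousAt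
      have ev1 : ∀ᶠ z in nhds (0:ℂ), |(bh 0).re| / 2 < |(bh z).re| := by
        apply (Complex.continuous_re.continuousAt.comp cb).abs.tendsto.eventually_const_lt
        have := abs_pos.mpr hre
        simp only [Function.comp]; linarith
      have ev2 : ∀ᶠ z in nhds (0:ℂ), |(bh z).im| < |(bh 0).im| + 1 := by
        apply (Complex.continuous_im.continuousAt.comp cb).abs.tendsto.eventually_lt_const
        exact lt_add_one _
      obtain ⟨ρ, hρ, hh⟩ := Metric.eventually_nhds_iff_ball.mp (hb.and (ev1.and ev2))
      have s1 := ball_subset_ball (x := (0:ℂ)) (min_le_left ρ δ)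
      have s2 := ball_subset_ball (x := (0:ℂ)) (min_le_right ρ δ)
      refine (h.mono (lt_min hρ h.hδ) (min_le_right ρ δ)).case_re (fun z hz => ha0 z (s2 hz)) bh
        (|(bh 0).re| / 2) (|(bh 0).im| + 1) (by have := abs_pos.mpr hre; linarith) (by positivity)
        fun z hz => ?_
      obtain ⟨k1, k2, k3⟩ := hh z (s1 hz)
      exact ⟨by rw [k1]; ring, k2.le, k3.le⟩
  | (n + 2), hb =>
    set m := n + 1 with hm
    have hmpos : 0 < m := by omega
    have hmc : (m : ℂ) ≠ 0 := by exact_mod_cast hmpos.ne'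
    have hk : (((n + 2 : ℕ) : ℤ) - 1) = (m : ℤ) := by push_cast [hm]; ring
    set ω := Complex.exp (2 * Real.pi * I / ((2 * m : ℕ) : ℂ)) with hω
    have hωp : IsPrimitiveRoot ω (2 * m) := Complex.isPrimitiveRoot_exp _ (by omega)
    have hωm : ω ^ m = -1 := by
      rw [hω, ← Complex.exp_nat_mul]
      rw [show (m : ℂ) * (2 * Real.pi * I / ((2 * m : ℕ) : ℂ)) = Real.pi * I by
        push_cast; field_simp]
      exact Complex.exp_pi_mul_I
    have hω1 : ‖ω‖ = 1 := hωp.norm'_eq_one (by omega)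
    set η := Complex.exp (((-(Complex.arg Γ) / m : ℝ) : ℂ) * I) with hη
    have hη1 : ‖η‖ = 1 := Complex.norm_exp_ofReal_mul_I _
    have hηΓ : η ^ m * Γ = ‖Γ‖ := by
      rw [hη, ← Complex.exp_nat_mul]
      conv_lhs => rw [← Complex.norm_mul_exp_arg_mul_I Γ]
      rw [mul_left_comm, Complex.norm_mul_exp_arg_mul_I, ← Complex.exp_add]
      rw [show (m : ℂ) * (((-(Complex.arg Γ) / m : ℝ) : ℂ) * I) + Complex.arg Γ * I = 0 by
        push_cast; field_simp; ring]
      simp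
    refine h.case_ray ha0 (n + 2) bh hbh hb (Finset.range (2 * m)) ⟨0, by simp [hmpos]⟩
      (fun j => ω ^ j * η) (fun j => (-1) ^ j) (η ^ m) ?_ ?_ ?_ ?_ ?_
    · intro j _
      rw [norm_mul, norm_pow, hω1, hη1]; simp
    · intro j _
      rw [← pow_mul, mul_comm, pow_mul]; simp
    · intro j _
      rw [hk, zpow_natCast, mul_pow, ← pow_mul, mul_comm j m, pow_mul, hωm]; push_cast; rfl
    · rw [← hΓ, hηΓ]; simpa using hΓpos
    · intro A hA
      rw [hk]
      obtain ⟨C, δ, h1, h2, h3⟩ := alt_sum m hmpos A hA ω hωp hωm hω1 η hη1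
      exact ⟨C, δ, h1, h2, fun r hr => by rw [zpow_natCast]; exact h3 r hr⟩

theorem RawData.main {P g e : ℂ → ℝ} {a0 a1 a2 b1 H1 H1' H2 H2' : ℂ → ℂ} {β δ C : ℝ}
    (h : RawData P g e a0 a1 a2 b1 H1 H1' H2 H2' β δ C) : ∀ᶠ z in nhds 0, b1 z = 0 := by
  obtain ⟨δ', C', hB⟩ := h.toB
  obtain ⟨ρ, hρ, hb⟩ := Metric.eventually_nhds_iff_ball.mp hB.a0z
  exact (hB.mono (lt_min hρ hB.hδ) (min_le_right ρ δ')).main fun z hz =>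
    hb z (ball_subset_ball (min_le_left _ _) hz)

lemma analyticAt_apply_const {E G : Type} [NormedAddCommGroup E] [NormedSpace ℝ E]
    [NormedAddCommGroup G] [NormedSpace ℝ G] {D : ℂ → (E →L[ℝ] G)} {z : ℂ}
    (hD : AnalyticAt ℝ D z) (v : E) : AnalyticAt ℝ (fun z => D z v) z :=
  ((ContinuousLinearMap.apply ℝ G v).analyticAt _).comp hD

lemma wDeriv_mul_re (u : ℂ → ℝ) (z a : ℂ) : (a * wDeriv u z).re = fderiv ℝ u z a / 2 := by
  have h := clm_complex (fderiv ℝ u z) a 1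
  rw [mul_one, mul_one] at h
  rw [h, wDeriv]
  rw [show a * ((((fderiv ℝ u z) 1 : ℝ) - Complex.I * ((fderiv ℝ u z) Complex.I : ℝ)) / 2)
    = (a * (((fderiv ℝ u z) 1 : ℝ) - Complex.I * ((fderiv ℝ u z) Complex.I : ℝ))) / ((2:ℝ):ℂ) by
      push_cast; ring, Complex.div_ofReal_re]
  simp

lemma tang_one (P : ℂ → ℝ) (f : ℂ → ℝ → ℝ) (z w : ℂ)
    (hP : DifferentiableAt ℝ P z)
    (hF : DifferentiableAt ℝ (fun q : ℂ × ℝ => f q.1 q.2) (z, w.im)) (x y : ℂ)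
    (h : (x * wDeriv (fun w => w.re + P z + f z w.im) w
        + y * wDeriv (fun v => w.re + P v + f v w.im) z).re = 0) :
    x.re + fderiv ℝ (fun q : ℂ × ℝ => f q.1 q.2) (z, w.im) (0, 1) * x.im
      + fderiv ℝ P z y + fderiv ℝ (fun q : ℂ × ℝ => f q.1 q.2) (z, w.im) (y, 0) = 0 := by
  set F : ℂ × ℝ → ℝ := fun q : ℂ × ℝ => f q.1 q.2 with hFdef
  rw [Complex.add_re, wDeriv_mul_re, wDeriv_mul_re] at h
  have d1 : HasFDerivAt (fun w : ℂ => w.re + P z + f z w.im)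
      (Complex.reCLM + (fderiv ℝ F (z, w.im)).comp
        ((0 : ℂ →L[ℝ] ℂ).prod Complex.imCLM)) w := by
    have h1 : HasFDerivAt (fun w : ℂ => (z, w.im)) ((0 : ℂ →L[ℝ] ℂ).prod Complex.imCLM) w :=
      (hasFDerivAt_const z w).prodMk Complex.imCLM.hasFDerivAt
    have h2 := HasFDerivAt.comp (g := F) w hF.hasFDerivAt h1
    exact (Complex.reCLM.hasFDerivAt.add_const (P z)).add h2
  have d2 : HasFDerivAt (fun v : ℂ => w.re + P v + f v w.im)
      (fderiv ℝ P z + (fderiv ℝ F (z, w.im)).comp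
        ((ContinuousLinearMap.id ℝ ℂ).prod (0 : ℂ →L[ℝ] ℝ))) z := by
    have h1 : HasFDerivAt (fun v : ℂ => (v, w.im))
        ((ContinuousLinearMap.id ℝ ℂ).prod (0 : ℂ →L[ℝ] ℝ)) z :=
      (hasFDerivAt_id z).prodMk (hasFDerivAt_const w.im z)
    have h2 := HasFDerivAt.comp (g := F) z hF.hasFDerivAt h1
    exact (hP.hasFDerivAt.const_add w.re).add h2
  rw [d1.fderiv, d2.fderiv] at h
  have e1 : fderiv ℝ F (z, w.im) (0, x.im) = fderiv ℝ F (z, w.im) (0, 1) * x.im := by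
    rw [show ((0:ℂ), x.im) = x.im • ((0:ℂ), (1:ℝ)) by simp, map_smul, smul_eq_mul, mul_comm]
  simp only [_root_.add_apply, ContinuousLinearMap.comp_apply, ContinuousLinearMap.prod_apply,
    Complex.reCLM_apply, Complex.imCLM_apply, _root_.zero_apply, ContinuousLinearMap.id_apply,
    e1] at h
  linarith

lemma T_equations (P : ℂ → ℝ) (f : ℂ → ℝ → ℝ) (r : ℝ)
    (hfan : AnalyticOnNhd ℝ (fun q : ℂ × ℝ => f q.1 q.2) (ball (0:ℂ) r ×ˢ Set.Ioo (-r) r))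
    (hf0 : ∀ z ∈ ball (0:ℂ) r, f z 0 = 0) (z : ℂ) (hz : z ∈ ball (0:ℂ) r)
    (h₁ h₂ : ℂ × ℂ → ℂ)
    (hd1 : DifferentiableAt ℂ (fun w => h₁ (w, z)) (-(P z : ℂ)))
    (hd2 : DifferentiableAt ℂ (fun w => h₂ (w, z)) (-(P z : ℂ)))
    (ht : ∀ᶠ t : ℝ in nhds 0, ∀ w : ℂ, w = I * t - P z - f z t →
      (h₁ (w, z)).re + fderiv ℝ (fun q : ℂ × ℝ => f q.1 q.2) (z, t) (0, 1) * (h₁ (w, z)).im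
      + fderiv ℝ P z (h₂ (w, z)) + fderiv ℝ (fun q : ℂ × ℝ => f q.1 q.2) (z, t) (h₂ (w, z), 0) = 0)
    (g e : ℂ → ℝ)
    (hg : g = fun z => fderiv ℝ (fun q : ℂ × ℝ => f q.1 q.2) (z, 0) (0, 1))
    (he : e = fun z => fderiv ℝ (fderiv ℝ (fun q : ℂ × ℝ => f q.1 q.2)) (z, 0) (0, 1) (0, 1)) :
    ((1 - I * g z) * h₁ (-(P z : ℂ), z)).re + fderiv ℝ P z (h₂ (-(P z : ℂ), z)) = 0 ∧
    (-I * e z * h₁ (-(P z : ℂ), z)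
      + (1 - I * g z) * ((I - g z) * deriv (fun w => h₁ (w, z)) (-(P z : ℂ)))).re
    + fderiv ℝ P z ((I - g z) * deriv (fun w => h₂ (w, z)) (-(P z : ℂ)))
    + fderiv ℝ g z (h₂ (-(P z : ℂ), z)) = 0 := by
  set F : ℂ × ℝ → ℝ := fun q : ℂ × ℝ => f q.1 q.2 with hF
  have hrpos : 0 < r := pos_of_mem_ball hz
  have han : AnalyticAt ℝ F (z, 0) := hfan _ ⟨hz, by constructor <;> simp [hrpos]⟩
  have hgz : g z = fderiv ℝ F (z, 0) (0, 1) := by rw [hg]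
  have hez : e z = fderiv ℝ (fderiv ℝ F) (z, 0) (0, 1) (0, 1) := by rw [he]
  -- horizontal derivatives vanish
  have hh : ∀ v : ℂ, fderiv ℝ F (z, 0) (v, 0) = 0 := by
    intro v
    have h1 : HasFDerivAt (fun v : ℂ => (v, (0:ℝ)))
        ((ContinuousLinearMap.id ℝ ℂ).prod (0 : ℂ →L[ℝ] ℝ)) z :=
      (hasFDerivAt_id z).prodMk (hasFDerivAt_const (0:ℝ) z)
    have h2 := HasFDerivAt.comp (g := F) z han.differentiableAt.hasFDerivAt h1
    have h3 : HasFDerivAt (F ∘ fun v : ℂ => (v, (0:ℝ))) (0 : ℂ →L[ℝ] ℝ) z := by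
      refine (hasFDerivAt_const (0:ℝ) z).congr_of_eventuallyEq ?_
      filter_upwards [isOpen_ball.mem_nhds hz] with v hv using hf0 v hv
    have := congrArg (fun D : ℂ →L[ℝ] ℝ => D v) (h2.unique h3)
    simpa using this
  have hDd : HasFDerivAt (fderiv ℝ F) (fderiv ℝ (fderiv ℝ F) (z, 0)) (z, 0) :=
    han.fderiv.differentiableAt.hasFDerivAt
  have hDg : ∀ v : ℂ, fderiv ℝ g z v = fderiv ℝ (fderiv ℝ F) (z, 0) (v, 0) (0, 1) := by
    intro v
    have h1 : HasFDerivAt (fun v : ℂ => (v, (0:ℝ)))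
        ((ContinuousLinearMap.id ℝ ℂ).prod (0 : ℂ →L[ℝ] ℝ)) z :=
      (hasFDerivAt_id z).prodMk (hasFDerivAt_const (0:ℝ) z)
    have h2 : HasFDerivAt (fun v : ℂ => fderiv ℝ F (v, 0)) _ z := hDd.comp z h1
    have h3 := h2.clm_apply (hasFDerivAt_const ((0:ℂ), (1:ℝ)) z)
    rw [hg, h3.fderiv]
    simp
  have hsymm : ∀ u v, fderiv ℝ (fderiv ℝ F) (z, 0) u v = fderiv ℝ (fderiv ℝ F) (z, 0) v u := by
    intro u v
    have : IsSymmSndFDerivAt ℝ F (z, 0) :=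
      (han.contDiffAt (n := 2)).isSymmSndFDerivAt (by simp)
    exact this u v
  set ζ : ℝ → ℂ := fun t => I * t - P z - f z t with hζ
  have hζ0 : ζ 0 = -(P z : ℂ) := by simp [hζ, hf0 z hz]
  have hline : HasDerivAt (fun t : ℝ => (z, t)) ((0:ℂ), (1:ℝ)) 0 :=
    (hasDerivAt_const (0:ℝ) z).prodMk (hasDerivAt_id (0:ℝ))
  have hft : HasDerivAt (fun t : ℝ => f z t) (g z) 0 := by
    rw [hgz]
    exact han.differentiableAt.hasFDerivAt.comp_hasDerivAt (0:ℝ) hline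
  have hζd : HasDerivAt ζ (I - g z) 0 := by
    have h1 : HasDerivAt (fun t : ℝ => I * (t:ℂ)) (I * 1) 0 :=
      (Complex.ofRealCLM.hasDerivAt (x := (0:ℝ))).const_mul I
    rw [mul_one] at h1
    exact (h1.sub_const _).sub hft.ofReal_comp
  have hA1 : HasDerivAt (fun t => h₁ (ζ t, z))
      ((I - g z) * deriv (fun w => h₁ (w, z)) (-(P z : ℂ))) 0 := by
    exact HasDerivAt.scomp_of_eq (0:ℝ) hd1.hasDerivAt hζd hζ0.symm
  have hA2 : HasDerivAt (fun t => h₂ (ζ t, z))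
      ((I - g z) * deriv (fun w => h₂ (w, z)) (-(P z : ℂ))) 0 := by
    exact HasDerivAt.scomp_of_eq (0:ℝ) hd2.hasDerivAt hζd hζ0.symm
  have hDF : HasDerivAt (fun t : ℝ => fderiv ℝ F (z, t)) (fderiv ℝ (fderiv ℝ F) (z, 0) (0, 1)) 0 :=
    hDd.comp_hasDerivAt (0:ℝ) hline
  set X1 := (I - g z) * deriv (fun w => h₁ (w, z)) (-(P z : ℂ)) with hX1
  set X2 := (I - g z) * deriv (fun w => h₂ (w, z)) (-(P z : ℂ)) with hX2
  constructor
  · have := ht.self_of_nhds (ζ 0) rfl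
    rw [hζ0, hh, ← hgz] at this
    rw [← this]
    simp
  · have k1 : HasDerivAt (fun t => (h₁ (ζ t, z)).re) X1.re 0 :=
      Complex.reCLM.hasFDerivAt.comp_hasDerivAt (0:ℝ) hA1
    have k2 : HasDerivAt (fun t => (h₁ (ζ t, z)).im) X1.im 0 :=
      Complex.imCLM.hasFDerivAt.comp_hasDerivAt (0:ℝ) hA1
    have k3 : HasDerivAt (fun t => fderiv ℝ P z (h₂ (ζ t, z))) (fderiv ℝ P z X2) 0 :=
      (fderiv ℝ P z).hasFDerivAt.comp_hasDerivAt (0:ℝ) hA2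
    have k4 := hDF.clm_apply (hasDerivAt_const (0:ℝ) ((0:ℂ), (1:ℝ)))
    have k5 := hDF.clm_apply (hA2.prodMk (hasDerivAt_const (0:ℝ) (0:ℝ)))
    have k6 := ((k1.add (k4.mul k2)).add k3).add k5
    have k7 := k6.unique ((hasDerivAt_const (0:ℝ) (0:ℝ)).congr_of_eventuallyEq (by
      filter_upwards [ht] with t ht using ht (ζ t) rfl))
    rw [hζ0] at k7
    rw [hh, hsymm _ (h₂ _, 0), ← hDg, ← hez, ← hgz, map_zero] at k7
    rw [← k7]
    simp
    ring

/-- Claim 4.3 of the paper: under the normalization `h₂(0,z₂) = iβz₂`, the coefficient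
`b₁(z₂) = ∂h₂/∂z₁(0,z₂)` vanishes identically near `0`. -/
theorem stmt_17
    (r s : ℝ) (hr : 0 < r) (hs : 0 < s)
    (P : ℂ → ℝ) (f : ℂ → ℝ → ℝ)
    (hPsm : ContDiffOn ℝ (⊤ : ℕ∞) P (ball (0:ℂ) r))
    (hP0 : P 0 = 0)
    (hPpos : ∀ z ∈ ball (0:ℂ) r, z ≠ 0 → 0 < P z)
    (hPflat : ∀ n : ℕ, P =o[nhds (0:ℂ)] fun z => ‖z‖ ^ n)
    (hfan : AnalyticOnNhd ℝ (fun q : ℂ × ℝ => f q.1 q.2) (ball (0:ℂ) r ×ˢ Set.Ioo (-r) r))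
    (hf0 : ∀ z ∈ ball (0:ℂ) r, f z 0 = 0)
    (h₁ h₂ : ℂ × ℂ → ℂ)
    (hh₁ : DifferentiableOn ℂ h₁ (ball (0 : ℂ × ℂ) s))
    (hh₂ : DifferentiableOn ℂ h₂ (ball (0 : ℂ × ℂ) s))
    (hv₁ : h₁ 0 = 0) (hv₂ : h₂ 0 = 0)
    (hne : ∃ z ∈ ball (0 : ℂ × ℂ) s, h₁ z ≠ 0 ∨ h₂ z ≠ 0)
    (htang : ∀ z : ℂ × ℂ, z ∈ ball (0 : ℂ × ℂ) s → z.1 ∈ ball (0:ℂ) r → z.2 ∈ ball (0:ℂ) r →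
      z.1.re + P z.2 + f z.2 z.1.im = 0 →
      (h₁ z * wDeriv (fun w => w.re + P z.2 + f z.2 w.im) z.1
        + h₂ z * wDeriv (fun w => z.1.re + P w + f w z.1.im) z.2).re = 0)
    (hnrot : ¬ (∀ z₂ ∈ ball (0:ℂ) r, ∀ z₂' ∈ ball (0:ℂ) r, ‖z₂‖ = ‖z₂'‖ →
      ∀ t ∈ Set.Ioo (-r) r, P z₂ + f z₂ t = P z₂' + f z₂' t))
    (β : ℝ) (hβ : β ≠ 0) (t₀ : ℝ) (ht₀ : 0 < t₀)
    (hnorm : ∀ z₂ ∈ ball (0:ℂ) t₀, h₂ (0, z₂) = Complex.I * (β:ℂ) * z₂) :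
    ∃ t : ℝ, 0 < t ∧ ∀ z₂ ∈ ball (0:ℂ) t, deriv (fun w => h₂ (w, z₂)) 0 = 0 := by
  have _unused := hne
  have _unused2 := hnrot
  have _unused3 := hv₂
  obtain ⟨δ1, C1, hδ1, hC1, hδ1s, p0, p1, p2, pb⟩ := coeffs h₁ s hs hh₁
  obtain ⟨δ2, C2, hδ2, hC2, hδ2s, -, q1, -, qb⟩ := coeffs h₂ s hs hh₂
  have h0r : (0:ℂ) ∈ ball (0:ℂ) r := by simpa using hr
  have hsm : ∀ z ∈ ball (0:ℂ) r, ContDiffAt ℝ 2 P z := fun z hz =>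
    contDiffAt_infty.mp (hPsm.contDiffAt (isOpen_ball.mem_nhds hz)) 2
  have hflat : FlatAt P := fun n => (hPflat n).isBigO
  have cP : ContinuousAt P 0 := (hsm 0 h0r).continuousAt
  have hm0 : 0 < min (min δ1 δ2) r := lt_min (lt_min hδ1 hδ2) hr
  have hPsmall := cP.tendsto.eventually_lt_const (by rw [hP0]; exact hm0)
  obtain ⟨ρ, hρ, hPs⟩ := Metric.eventually_nhds_iff_ball.mp hPsmall
  set δ := min (min (min δ1 δ2) r) (min t₀ ρ) with hδdef
  have hδ : 0 < δ := lt_min hm0 (lt_min ht₀ hρ)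
  have l1 : δ ≤ δ1 := (min_le_left _ _).trans ((min_le_left _ _).trans (min_le_left _ _))
  have l2 : δ ≤ δ2 := (min_le_left _ _).trans ((min_le_left _ _).trans (min_le_right _ _))
  have l3 : δ ≤ r := (min_le_left _ _).trans (min_le_right _ _)
  have l4 : δ ≤ t₀ := (min_le_right _ _).trans (min_le_left _ _)
  have l5 : δ ≤ ρ := (min_le_right _ _).trans (min_le_right _ _)
  have s1 := ball_subset_ball (x := (0:ℂ)) l1
  have s2 := ball_subset_ball (x := (0:ℂ)) l2
  have s3 := ball_subset_ball (x := (0:ℂ)) l3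
  have s4 := ball_subset_ball (x := (0:ℂ)) l4
  have s5 := ball_subset_ball (x := (0:ℂ)) l5
  have hPn : ∀ z ∈ ball (0:ℂ) δ, 0 ≤ P z := by
    intro z hz
    by_cases h0 : z = 0
    · rw [h0, hP0]
    · exact (hPpos z (s3 hz) h0).le
  have hnP : ∀ z ∈ ball (0:ℂ) δ, ‖-(P z : ℂ)‖ = P z := by
    intro z hz
    rw [norm_neg, Complex.norm_real, Real.norm_eq_abs, abs_of_nonneg (hPn z hz)]
  have w1 : ∀ z ∈ ball (0:ℂ) δ, -(P z : ℂ) ∈ ball (0:ℂ) δ1 := by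
    intro z hz
    rw [mem_ball_zero_iff, hnP z hz]
    exact (hPs z (s5 hz)).trans_le ((min_le_left _ _).trans (min_le_left _ _))
  have w2 : ∀ z ∈ ball (0:ℂ) δ, -(P z : ℂ) ∈ ball (0:ℂ) δ2 := by
    intro z hz
    rw [mem_ball_zero_iff, hnP z hz]
    exact (hPs z (s5 hz)).trans_le ((min_le_left _ _).trans (min_le_right _ _))
  set F : ℂ × ℝ → ℝ := fun q : ℂ × ℝ => f q.1 q.2 with hF
  set g : ℂ → ℝ := fun z => fderiv ℝ F (z, 0) (0, 1) with hg
  set e : ℂ → ℝ := fun z => fderiv ℝ (fderiv ℝ F) (z, 0) (0, 1) (0, 1) with he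
  have hmem : ∀ z ∈ ball (0:ℂ) r, (z, (0:ℝ)) ∈ ball (0:ℂ) r ×ˢ Set.Ioo (-r) r := fun z hz =>
    ⟨hz, by constructor <;> simp [hr]⟩
  have hinc : ∀ z : ℂ, AnalyticAt ℝ (fun z : ℂ => (z, (0:ℝ))) z := fun z =>
    AnalyticAt.prod analyticAt_id analyticAt_const
  have hgan : AnalyticOnNhd ℝ g (ball 0 δ) := by
    intro z hz
    have h1 : AnalyticAt ℝ (fderiv ℝ F) (z, 0) := (hfan _ (hmem z (s3 hz))).fderiv
    have h2 : AnalyticAt ℝ (fun z : ℂ => fderiv ℝ F (z, 0)) z :=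
      AnalyticAt.fun_comp (f := fun z : ℂ => (z, (0:ℝ))) h1 (hinc z)
    exact ((ContinuousLinearMap.apply ℝ ℝ ((0:ℂ), (1:ℝ))).analyticAt _).comp h2
  have hean : AnalyticOnNhd ℝ e (ball 0 δ) := by
    intro z hz
    have h1 : AnalyticAt ℝ (fderiv ℝ (fderiv ℝ F)) (z, 0) := (hfan _ (hmem z (s3 hz))).fderiv.fderiv
    have h2 : AnalyticAt ℝ (fun z : ℂ => fderiv ℝ (fderiv ℝ F) (z, 0)) z :=
      AnalyticAt.fun_comp (f := fun z : ℂ => (z, (0:ℝ))) h1 (hinc z)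
    have h3 : AnalyticAt ℝ (fun z : ℂ => fderiv ℝ (fderiv ℝ F) (z, 0) (0, 1)) z :=
      analyticAt_apply_const h2 _
    exact ((ContinuousLinearMap.apply ℝ ℝ ((0:ℂ), (1:ℝ))).analyticAt _).comp h3
  have hT : ∀ z ∈ ball (0:ℂ) δ, _ := fun z hz =>
    T_equations P f r hfan hf0 z (s3 hz) h₁ h₂
    ((pb z (s1 hz)).1.differentiableAt (isOpen_ball.mem_nhds (w1 z hz)))
    ((qb z (s2 hz)).1.differentiableAt (isOpen_ball.mem_nhds (w2 z hz))) (by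
      have hzr := s3 hz
      have cf : ContinuousAt (fun t : ℝ => f z t) 0 :=
        ContinuousAt.comp (g := F) (f := fun t : ℝ => (z, t))
          (hfan _ (hmem z hzr)).continuousAt (by fun_prop)
      have cζ : ContinuousAt (fun t : ℝ => ‖I * (t:ℂ) - P z - f z t‖) 0 := by
        have : ContinuousAt (fun t : ℝ => ((f z t : ℝ) : ℂ)) 0 :=
          Complex.continuous_ofReal.continuousAt.comp cf
        refine ContinuousAt.norm (ContinuousAt.sub ?_ this)
        fun_prop
      have hlt : ‖I * ((0:ℝ):ℂ) - P z - f z 0‖ < min (min δ1 δ2) r := by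
        rw [hf0 z hzr]
        simp only [ofReal_zero, mul_zero, zero_sub, sub_zero]
        rw [hnP z hz]
        exact hPs z (s5 hz)
      have ev := cζ.tendsto.eventually_lt_const hlt
      filter_upwards [ev, Ioo_mem_nhds (neg_lt_zero.mpr hr) hr] with t ht htr w hw
      rw [← hw] at ht
      have him : w.im = t := by rw [hw]; simp
      have hre : w.re = - P z - f z t := by rw [hw]; simp
      have hws : ‖w‖ < s := (ht.trans_le ((min_le_left _ _).trans (min_le_left _ _))).trans hδ1s
      have hzs : ‖z‖ < s := (mem_ball_zero_iff.mp (s1 hz)).trans hδ1s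
      have h1 := htang (w, z) (by
          rw [mem_ball_zero_iff, Prod.norm_def]; exact max_lt hws hzs)
        (by rw [mem_ball_zero_iff]; exact ht.trans_le (min_le_right _ _)) hzr
        (by simp only [him, hre]; ring)
      have h2 := tang_one P f z w ((hsm z hzr).differentiableAt (by norm_num))
        (hfan _ ⟨hzr, by rw [him]; exact htr⟩).differentiableAt _ _ h1
      rw [him] at h2
      exact h2) g e rfl rfl
  have hraw : RawData P g e (fun z => h₁ (0, z)) (fun z => deriv (fun w => h₁ (w, z)) 0)
      (fun z => deriv (deriv (fun w => h₁ (w, z))) 0) (fun z => deriv (fun w => h₂ (w, z)) 0)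
      (fun z => h₁ (-(P z : ℂ), z)) (fun z => deriv (fun w => h₁ (w, z)) (-(P z : ℂ)))
      (fun z => h₂ (-(P z : ℂ), z)) (fun z => deriv (fun w => h₂ (w, z)) (-(P z : ℂ)))
      β δ (max C1 C2) := by
    have k1 : ∀ z ∈ ball (0:ℂ) δ, C1 * P z ≤ max C1 C2 * P z := fun z hz =>
      mul_le_mul_of_nonneg_right (le_max_left _ _) (hPn z hz)
    have k2 : ∀ z, C1 * P z ^ 2 ≤ max C1 C2 * P z ^ 2 := fun z =>
      mul_le_mul_of_nonneg_right (le_max_left _ _) (sq_nonneg _)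
    have k3 : ∀ z ∈ ball (0:ℂ) δ, C2 * P z ≤ max C1 C2 * P z := fun z hz =>
      mul_le_mul_of_nonneg_right (le_max_right _ _) (hPn z hz)
    have k4 : ∀ z, C2 * P z ^ 2 ≤ max C1 C2 * P z ^ 2 := fun z =>
      mul_le_mul_of_nonneg_right (le_max_right _ _) (sq_nonneg _)
    exact
    { hβ := hβ
      hδ := hδ
      hC := hC1.trans (le_max_left _ _)
      P0 := hP0
      pos := fun z hz => hPpos z (s3 hz)
      smooth := fun z hz => hsm z (s3 hz)
      flat := hflat
      gan := hgan
      ean := hean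
      da0 := p0.mono s1
      da1 := p1.mono s1
      da2 := p2.mono s1
      db1 := q1.mono s2
      a00 := hv₁
      H1a := fun z hz => by
        have := ((pb z (s1 hz)).2 _ (w1 z hz)).1
        rw [hnP z hz] at this
        exact this.trans (k1 z hz)
      H1b := fun z hz => by
        have := ((pb z (s1 hz)).2 _ (w1 z hz)).2.1
        rw [hnP z hz, neg_mul, sub_neg_eq_add] at this
        exact this.trans (k2 z)
      H1'a := fun z hz => by
        have := ((pb z (s1 hz)).2 _ (w1 z hz)).2.2.1
        rw [hnP z hz] at this
        exact this.trans (k1 z hz)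
      H1'b := fun z hz => by
        have := ((pb z (s1 hz)).2 _ (w1 z hz)).2.2.2
        rw [hnP z hz, neg_mul, sub_neg_eq_add] at this
        exact this.trans (k2 z)
      H2b := fun z hz => by
        have := ((qb z (s2 hz)).2 _ (w2 z hz)).2.1
        rw [hnP z hz, neg_mul, sub_neg_eq_add, hnorm z (s4 hz)] at this
        exact this.trans (k4 z)
      H2'a := fun z hz => by
        have := ((qb z (s2 hz)).2 _ (w2 z hz)).2.2.1
        rw [hnP z hz] at this
        exact this.trans (k3 z hz)
      T0 := fun z hz => (hT z hz).1
      T1 := fun z hz => (hT z hz).2 }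
  obtain ⟨t, ht, hb⟩ := Metric.eventually_nhds_iff_ball.mp hraw.main
  exact ⟨t, ht, hb⟩
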